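/- For every complex number q with 0 < |q| < 1, one has ∑_{i,j,k,l ≥ 0} q^{4i²+4j²+4k²+5l²−4il−4jl+4kl−4i+4j−4k−2l} / ((q⁸;q⁸)_i (q⁸;q⁸)_j (q⁸;q⁸)_k (q⁸;q⁸)_l) = 4 J_16³ J_{32,80} / J_8⁴ + q^{−1} · J_8⁷ J_{12,40} J_{16,80} / (J_4⁴ J_16⁴ J_80). (This is the paper's identity F(q^{−1}, q, q^{−1}, q^{−1/2}; q²) = 4 J_4³ J_{8,20}/J_2⁴ + q^{−1/4} J_2⁷ J_{3,10} J_{4,20}/(J_1⁴ J_4⁴ J_20), with q replaced by q⁴ throughout to clear fractional exponents.) -/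

import Mathlib

open scoped BigOperators

/-- The infinite q-Pochhammer symbol `(a; q)_∞ = ∏_{k=0}^∞ (1 - a q^k)`. -/
noncomputable def qPochInf (a q : ℂ) : ℂ := ∏' n : ℕ, (1 - a * q ^ n)

/-- The finite q-Pochhammer symbol `(a; q)_n = ∏_{k=0}^{n-1} (1 - a q^k)`. -/
noncomputable def qPoch (a q : ℂ) (n : ℕ) : ℂ :=
  Finset.prod (Finset.range n) (fun k => 1 - a * q ^ k)

/-- `J_m = (q^m; q^m)_∞`. -/
noncomputable def J (q : ℂ) (m : ℕ) : ℂ := qPochInf (q ^ m) (q ^ m)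

/-- `J_{a,m} = (q^a; q^m)_∞ (q^{m-a}; q^m)_∞ (q^m; q^m)_∞`. -/
noncomputable def Jam (q : ℂ) (a m : ℕ) : ℂ :=
  qPochInf (q ^ a) (q ^ m) * qPochInf (q ^ (m - a)) (q ^ m) * qPochInf (q ^ m) (q ^ m)

lemma summ_real (x : ℝ) (hx0 : 0 < x) (hx1 : x < 1) (ρ : ℝ) (hρ : 0 < ρ) (A B : ℤ) (hA : 1 ≤ A) :
    Summable fun c : ℤ => x ^ (A * c ^ 2 + B * c) * ρ ^ c := by
  obtain ⟨K1, hK1⟩ := exists_pow_lt_of_lt_one hρ hx1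
  obtain ⟨K2, hK2⟩ := exists_pow_lt_of_lt_one (inv_pos.2 hρ) hx1
  have hge : ∀ c : ℤ, ρ ^ c ≤ x ^ (-(((K1 : ℤ) + K2) * |c|)) := by
    intro c
    have e1 : x ^ (K1 + K2) ≤ ρ := by
      refine le_trans ?_ hK1.le
      exact pow_le_pow_of_le_one hx0.le hx1.le (by omega)
    have e2 : x ^ (K1 + K2) ≤ ρ⁻¹ := by
      refine le_trans ?_ hK2.le
      exact pow_le_pow_of_le_one hx0.le hx1.le (by omega)
    have hp : 0 < x ^ (K1 + K2) := by positivity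
    rcases le_total 0 c with h | h
    · lift c to ℕ using h
      rw [abs_of_nonneg (by positivity), zpow_neg, zpow_natCast]
      have : x ^ (((K1 : ℤ) + K2) * (c : ℤ)) = (x ^ (K1 + K2)) ^ c := by
        rw [← pow_mul, ← zpow_natCast]; push_cast; rfl
      rw [this, ← inv_pow]
      exact pow_le_pow_left₀ hρ.le ((le_inv_comm₀ hp hρ).1 e2) c
    · obtain ⟨d, rfl⟩ : ∃ d : ℕ, c = -(d : ℤ) := ⟨c.natAbs, by omega⟩
      rw [abs_neg, abs_of_nonneg (by positivity), zpow_neg, zpow_neg, zpow_natCast]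
      have : x ^ (((K1 : ℤ) + K2) * (d : ℤ)) = (x ^ (K1 + K2)) ^ d := by
        rw [← pow_mul, ← zpow_natCast]; push_cast; rfl
      rw [this]
      exact inv_anti₀ (by positivity) (pow_le_pow_left₀ hp.le e1 d)
  have hs : Summable fun c : ℤ => x ^ (-((|B| + K1 + K2 + 1) ^ 2) : ℤ) * x ^ |c| := by
    apply Summable.mul_left
    apply Summable.of_nat_of_neg
    · simpa using summable_geometric_of_lt_one hx0.le hx1
    · simpa using summable_geometric_of_lt_one hx0.le hx1
  refine Summable.of_nonneg_of_le (fun c => by positivity) (fun c => ?_) hs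
  calc _ ≤ x ^ (A * c ^ 2 + B * c) * x ^ (-(((K1 : ℤ) + K2) * |c|)) := by
        gcongr; exact hge c
    _ = x ^ (A * c ^ 2 + B * c + (-(((K1 : ℤ) + K2) * |c|))) := (zpow_add₀ hx0.ne' _ _).symm
    _ ≤ x ^ (-((|B| + K1 + K2 + 1) ^ 2) + |c|) := by
        apply zpow_le_zpow_right_of_le_one₀ hx0 hx1.le
        have h1 : -(|B| * |c|) ≤ B * c := by
          rw [← abs_mul]; exact neg_abs_le _
        have h2 : c ^ 2 ≤ A * c ^ 2 := by nlinarith [sq_nonneg c]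
        have h3 : c ^ 2 = |c| ^ 2 := (sq_abs c).symm
        have h4 : 0 ≤ |c| := abs_nonneg c
        have h5 : 0 ≤ |B| := abs_nonneg B
        have h6 : (0:ℤ) ≤ K1 := by positivity
        have h7 : (0:ℤ) ≤ K2 := by positivity
        nlinarith [sq_nonneg (2*|c| - (|B| + K1 + K2 + 1)), sq_nonneg (|B| + K1 + K2 + 1)]
    _ = _ := by rw [zpow_add₀ hx0.ne']

lemma summC {q : ℂ} (h0 : q ≠ 0) (h1 : ‖q‖ < 1) {ρ : ℝ} (hρ : 0 < ρ) (A B : ℤ) (hA : 1 ≤ A)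
    (C : ℝ) (f : ℤ → ℂ) (h : ∀ c, ‖f c‖ ≤ C * (‖q‖ ^ (A * c ^ 2 + B * c) * ρ ^ c)) :
    Summable fun c => ‖f c‖ :=
  Summable.of_nonneg_of_le (fun _ => norm_nonneg _) h
    ((summ_real ‖q‖ (norm_pos_iff.2 h0) h1 ρ hρ A B hA).mul_left C)

/-- theta-like sums with bounded coefficients -/
lemma summB {q : ℂ} (h0 : q ≠ 0) (h1 : ‖q‖ < 1) (A B D : ℤ) (hA : 1 ≤ A)
    (C : ℝ) (g : ℤ → ℂ) (h : ∀ c, ‖g c‖ ≤ C) :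
    Summable fun c : ℤ => ‖q ^ (A * c ^ 2 + B * c + D) * g c‖ := by
  apply summC h0 h1 (ρ := 1) one_pos A B hA (C * ‖q‖ ^ D)
  intro c
  rw [norm_mul, norm_zpow, one_zpow, zpow_add₀ (norm_ne_zero_iff.2 h0), mul_one]
  have := h c
  have : 0 ≤ ‖q‖ ^ (A * c ^ 2 + B * c) * ‖q‖ ^ D := by positivity
  nlinarith [h c]

lemma qPoch_succ (a q : ℂ) (n : ℕ) : qPoch a q (n + 1) = qPoch a q n * (1 - a * q ^ n) := by
  simp [qPoch, Finset.prod_range_succ]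

lemma qPoch_succ' (a q : ℂ) (n : ℕ) : qPoch a q (n + 1) = (1 - a) * qPoch (a * q) q n := by
  simp [qPoch, Finset.prod_range_succ', mul_comm, pow_succ, mul_assoc, mul_left_comm]

@[simp] lemma qPoch_zero (a q : ℂ) : qPoch a q 0 = 1 := by simp [qPoch]

lemma summ_geo (a : ℂ) {p : ℂ} (hp : ‖p‖ < 1) : Summable fun n : ℕ => ‖-(a * p ^ n)‖ := by
  simp only [norm_neg, norm_mul, norm_pow]
  exact (summable_geometric_of_lt_one (norm_nonneg _) hp).mul_left _

lemma mult_geo (a : ℂ) {p : ℂ} (hp : ‖p‖ < 1) : Multipliable fun n : ℕ => (1 - a * p ^ n) := by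
  simpa [sub_eq_add_neg] using multipliable_one_add_of_summable (summ_geo a hp)

lemma qPoch_tendsto (a : ℂ) {p : ℂ} (hp : ‖p‖ < 1) :
    Filter.Tendsto (qPoch a p) Filter.atTop (nhds (qPochInf a p)) :=
  (mult_geo a hp).hasProd.tendsto_prod_nat

lemma qPochInf_ne {a p : ℂ} (hp : ‖p‖ < 1) (h : ∀ n : ℕ, 1 - a * p ^ n ≠ 0) : qPochInf a p ≠ 0 := by
  have := tprod_one_add_ne_zero_of_summable (f := fun n : ℕ => -(a * p ^ n))
    (fun n => by simpa [sub_eq_add_neg] using h n) (summ_geo a hp)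
  simpa [qPochInf, sub_eq_add_neg] using this

lemma qPochInf_split (a : ℂ) {p : ℂ} (hp : ‖p‖ < 1) (n : ℕ) :
    qPochInf a p = qPoch a p n * qPochInf (a * p ^ n) p := by
  have h1 := (qPoch_tendsto a hp).comp (Filter.tendsto_add_atTop_nat n)
  have h2 := (qPoch_tendsto (a * p ^ n) hp).const_mul (qPoch a p n)
  refine tendsto_nhds_unique h1 (h2.congr fun m => ?_)
  simp only [Function.comp, qPoch]
  rw [add_comm m n, Finset.prod_range_add]
  congr 1
  refine Finset.prod_congr rfl fun k _ => ?_
  rw [pow_add]; ring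

lemma one_sub_ne {q : ℂ} (h : ‖q‖ < 1) : 1 - q ≠ 0 := by
  intro hh
  have : q = 1 := (sub_eq_zero.1 hh).symm
  simp [this] at h

lemma one_sub_pow_ne {q : ℂ} (h : ‖q‖ < 1) (n : ℕ) (hn : n ≠ 0) : 1 - q ^ n ≠ 0 := by
  apply one_sub_ne
  rw [norm_pow]; exact pow_lt_one₀ (norm_nonneg _) h hn

lemma qPochInf_self_ne {p : ℂ} (hp : ‖p‖ < 1) : qPochInf p p ≠ 0 := by
  apply qPochInf_ne hp
  intro n
  rw [← pow_succ']; exact one_sub_pow_ne hp _ (by omega)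

lemma qPoch_self_ne {p : ℂ} (hp : ‖p‖ < 1) (n : ℕ) : qPoch p p n ≠ 0 := by
  rw [qPoch, Finset.prod_ne_zero_iff]
  intro k _
  rw [← pow_succ']; exact one_sub_pow_ne hp _ (by omega)

/-- reciprocal of `(p;p)_m`, extended by zero -/
noncomputable def RR (p : ℂ) (m : ℤ) : ℂ := if 0 ≤ m then (qPoch p p m.toNat)⁻¹ else 0

lemma RR_nat (p : ℂ) (m : ℕ) : RR p m = (qPoch p p m)⁻¹ := by simp [RR]

lemma RR_neg (p : ℂ) {m : ℤ} (h : m < 0) : RR p m = 0 := by simp [RR, h]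

lemma RR_zero (p : ℂ) : RR p 0 = 1 := by simp [RR]

lemma RR_step {p : ℂ} (hp : ‖p‖ < 1) (m : ℤ) : RR p (m - 1) = (1 - p ^ m) * RR p m := by
  rcases lt_trichotomy m 0 with h | h | h
  · rw [RR_neg p h, RR_neg p (by omega)]; simp
  · subst h; rw [RR_neg p (by omega)]; simp
  · obtain ⟨k, rfl⟩ : ∃ k : ℕ, m = (k : ℤ) + 1 := ⟨(m - 1).toNat, by omega⟩
    have e : ((k : ℤ) + 1) = ((k + 1 : ℕ) : ℤ) := by push_cast; rfl
    rw [add_sub_cancel_right, e, RR_nat, RR_nat, qPoch_succ, zpow_natCast, ← pow_succ']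
    have := one_sub_pow_ne hp (k+1) (by omega)
    have := qPoch_self_ne hp k
    field_simp

lemma RR_tendsto {p : ℂ} (hp : ‖p‖ < 1) :
    Filter.Tendsto (fun n : ℕ => RR p n) Filter.atTop (nhds (qPochInf p p)⁻¹) := by
  simp only [RR_nat]
  exact (qPoch_tendsto p hp).inv₀ (qPochInf_self_ne hp)

lemma seq_bdd {f : ℕ → ℂ} {a : ℂ} (h : Filter.Tendsto f Filter.atTop (nhds a)) :
    ∃ C : ℝ, 0 < C ∧ ∀ n, ‖f n‖ ≤ C := by
  obtain ⟨C, hC⟩ := (Metric.isBounded_range_of_tendsto f h).exists_norm_le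
  exact ⟨max C 1, by positivity, fun n => le_max_of_le_left (hC _ ⟨n, rfl⟩)⟩

lemma RR_bdd {p : ℂ} (hp : ‖p‖ < 1) : ∃ C : ℝ, 0 < C ∧ ∀ m, ‖RR p m‖ ≤ C := by
  obtain ⟨C, hC, h⟩ := seq_bdd (RR_tendsto hp)
  refine ⟨C, hC, fun m => ?_⟩
  rcases lt_or_ge m 0 with h' | h'
  · rw [RR_neg p h']; simpa using hC.le
  · lift m to ℕ using h'; exact h m

/-- sums over ℤ of functions supported on ℕ -/
lemma tsum_int_nat (f : ℤ → ℂ) (h : ∀ m < 0, f m = 0) : ∑' m : ℤ, f m = ∑' n : ℕ, f n := by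
  refine (Function.Injective.tsum_eq (g := fun n : ℕ => (n : ℤ)) Nat.cast_injective ?_).symm
  intro m hm
  rcases lt_or_ge m 0 with h' | h'
  · exact absurd (h m h') hm
  · exact ⟨m.toNat, by simp [h']⟩

lemma tsum_shift (f : ℤ → ℂ) (k : ℤ) : ∑' m : ℤ, f (m + k) = ∑' m : ℤ, f m :=
  (Equiv.addRight k).tsum_eq f

lemma summ_shift {f : ℤ → ℂ} (h : Summable f) (k : ℤ) : Summable fun m : ℤ => f (m + k) :=
  (Equiv.addRight k).summable_iff.2 h

lemma sq_zpow (w : ℂ) (n : ℤ) : (w ^ 2) ^ n = w ^ (2 * n) := by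
  rw [← zpow_natCast, ← zpow_mul]; norm_cast

lemma pow_zpow' (w : ℂ) (k : ℕ) (n : ℤ) : (w ^ k) ^ n = w ^ ((k : ℤ) * n) := by
  rw [← zpow_natCast, ← zpow_mul]

lemma norm_sq_lt {w : ℂ} (h1 : ‖w‖ < 1) : ‖w ^ 2‖ < 1 := by
  rw [norm_pow]; exact pow_lt_one₀ (norm_nonneg _) h1 (by norm_num)

lemma norm_pow_lt' {w : ℂ} (h1 : ‖w‖ < 1) (k : ℕ) (hk : k ≠ 0) : ‖w ^ k‖ < 1 := by
  rw [norm_pow]; exact pow_lt_one₀ (norm_nonneg _) h1 hk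

lemma euler_summ {w : ℂ} (h0 : w ≠ 0) (h1 : ‖w‖ < 1) {z : ℂ} (hz : z ≠ 0) :
    Summable fun n : ℤ => ‖w ^ (n ^ 2 - n) * z ^ n * RR (w ^ 2) n‖ := by
  obtain ⟨C, hC, hR⟩ := RR_bdd (norm_sq_lt h1)
  apply summC h0 h1 (norm_pos_iff.2 hz) 1 (-1) le_rfl C
  intro c
  rw [norm_mul, norm_mul, norm_zpow, norm_zpow, mul_comm C]
  have e : 1 * c ^ 2 + -1 * c = c ^ 2 - c := by ring
  rw [e]
  gcongr
  exact hR c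

noncomputable def eul (w z : ℂ) : ℂ := ∑' n : ℤ, w ^ (n ^ 2 - n) * z ^ n * RR (w ^ 2) n

lemma eul_step {w : ℂ} (h0 : w ≠ 0) (h1 : ‖w‖ < 1) {z : ℂ} (hz : z ≠ 0) :
    eul w z = (1 + z) * eul w (z * w ^ 2) := by
  have hp := norm_sq_lt h1
  have hz' : z * w ^ 2 ≠ 0 := by positivity
  have s1 := (euler_summ h0 h1 hz).of_norm
  have s2 := (euler_summ h0 h1 hz').of_norm
  have key : eul w z - eul w (z * w ^ 2) = z * eul w (z * w ^ 2) := by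
    unfold eul
    rw [← s1.tsum_sub s2, ← tsum_mul_left, ← tsum_shift _ 1]
    refine tsum_congr fun n => ?_
    have := RR_step hp (n + 1)
    rw [add_sub_cancel_right] at this
    rw [mul_zpow, mul_zpow, this]
    have e1 : (w ^ 2) ^ (n + 1) = w ^ (2 * (n + 1)) := sq_zpow w _
    have e2 : w ^ ((n + 1) ^ 2 - (n + 1)) = w ^ (n ^ 2 - n) * (w ^ 2) ^ n := by
      rw [sq_zpow, ← zpow_add₀ h0]; congr 1; ring
    rw [e2, zpow_add_one₀ hz]
    ring
  linear_combination key

lemma eul_iter {w : ℂ} (h0 : w ≠ 0) (h1 : ‖w‖ < 1) {z : ℂ} (hz : z ≠ 0) (N : ℕ) :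
    eul w z = qPoch (-z) (w ^ 2) N * eul w (z * (w ^ 2) ^ N) := by
  induction N with
  | zero => simp
  | succ N ih =>
    rw [ih, qPoch_succ, eul_step h0 h1 (z := z * (w ^ 2) ^ N) (by positivity), pow_succ]
    ring_nf

lemma euler {w : ℂ} (h0 : w ≠ 0) (h1 : ‖w‖ < 1) {z : ℂ} (hz : z ≠ 0) :
    ∑' n : ℤ, w ^ (n ^ 2 - n) * z ^ n * RR (w ^ 2) n = qPochInf (-z) (w ^ 2) := by
  have hp := norm_sq_lt h1
  change eul w z = _
  have lim : Filter.Tendsto (fun N : ℕ => eul w (z * (w ^ 2) ^ N)) Filter.atTop (nhds 1) := by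
    have : (1 : ℂ) = ∑' n : ℤ, if n = 0 then 1 else 0 := by simp
    rw [this]
    unfold eul
    refine tendsto_tsum_of_dominated_convergence (euler_summ h0 h1 hz) ?_ ?_
    · intro n
      rcases lt_trichotomy n 0 with h | h | h
      · simp [RR_neg _ h, h.ne]
      · subst h; simp [RR_zero]
      · lift n to ℕ using h.le
        have hn : n ≠ 0 := by omega
        simp only [zpow_natCast]
        rw [if_neg (by omega)]
        have t1 : Filter.Tendsto (fun N : ℕ => z * (w ^ 2) ^ N) Filter.atTop (nhds (z * 0)) :=
          (tendsto_pow_atTop_nhds_zero_of_norm_lt_one hp).const_mul z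
        have t2 := ((t1.pow n).const_mul (w ^ ((n : ℤ) ^ 2 - n))).mul_const (RR (w ^ 2) n)
        simpa [hn] using t2
    · refine Filter.Eventually.of_forall fun N n => ?_
      rcases lt_or_ge n 0 with h | h
      · simp [RR_neg _ h]
      · lift n to ℕ using h
        rw [norm_mul, norm_mul, norm_mul, norm_mul]
        gcongr
        rw [zpow_natCast, zpow_natCast, norm_pow, norm_pow, norm_mul]
        gcongr
        rw [norm_pow]
        exact mul_le_of_le_one_right (norm_nonneg _) (pow_le_one₀ (norm_nonneg _) hp.le)
  have l2 := (qPoch_tendsto (-z) hp).mul lim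
  rw [mul_one] at l2
  exact tendsto_nhds_unique (tendsto_const_nhds.congr fun N => eul_iter h0 h1 hz N) l2

lemma summB1 {q : ℂ} (h0 : q ≠ 0) (h1 : ‖q‖ < 1) (A B D : ℤ) (hA : 1 ≤ A)
    (C : ℝ) (g : ℤ → ℂ) (h : ∀ c, ‖g c‖ ≤ C) :
    Summable fun c : ℤ => q ^ (A * c ^ 2 + B * c + D) * g c :=
  (summB h0 h1 A B D hA C g h).of_norm

lemma RR2_bdd {p : ℂ} (hp : ‖p‖ < 1) : ∃ C : ℝ, 0 < C ∧ ∀ m n, ‖RR p m * RR p n‖ ≤ C := by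
  obtain ⟨C, hC, hR⟩ := RR_bdd hp
  refine ⟨C * C, by positivity, fun m n => ?_⟩
  rw [norm_mul]
  exact mul_le_mul (hR m) (hR n) (norm_nonneg _) hC.le

noncomputable def DD (q : ℂ) (s : ℤ) : ℂ := ∑' j : ℤ, q ^ (j ^ 2 + s * j) * (RR q j * RR q (j + s))

lemma DD_summ {q : ℂ} (h0 : q ≠ 0) (h1 : ‖q‖ < 1) (s : ℤ) :
    Summable fun j : ℤ => q ^ (j ^ 2 + s * j) * (RR q j * RR q (j + s)) := by
  obtain ⟨C, hC, hR⟩ := RR2_bdd h1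
  have := summB1 h0 h1 1 s 0 le_rfl C (fun j => RR q j * RR q (j + s)) (fun c => hR _ _)
  simpa using this

lemma DD_step {q : ℂ} (h0 : q ≠ 0) (h1 : ‖q‖ < 1) (s : ℤ) : DD q (s + 1) = DD q s := by
  obtain ⟨C, hC, hR⟩ := RR2_bdd h1
  have s1 := DD_summ h0 h1 s
  have s2 := DD_summ h0 h1 (s + 1)
  have s3 : Summable fun j : ℤ => q ^ (j ^ 2 + s * j) * (RR q (j - 1) * RR q (j + s)) := by
    have := summB1 h0 h1 1 s 0 le_rfl C (fun j => RR q (j - 1) * RR q (j + s)) (fun c => hR _ _)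
    simpa using this
  have s4 := summ_shift s3 1
  have key : DD q s - DD q (s + 1) = 0 := by
    unfold DD
    rw [← s1.tsum_sub s2]
    have : ∀ j : ℤ, q ^ (j ^ 2 + s * j) * (RR q j * RR q (j + s)) -
        q ^ (j ^ 2 + (s + 1) * j) * (RR q j * RR q (j + (s + 1))) =
        q ^ (j ^ 2 + s * j) * (RR q (j - 1) * RR q (j + s)) -
        q ^ ((j + 1) ^ 2 + s * (j + 1)) * (RR q (j + 1 - 1) * RR q (j + 1 + s)) := by
      intro j
      have r1 := RR_step h1 j
      have r2 := RR_step h1 (j + s + 1)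
      rw [add_sub_cancel_right] at r2 ⊢
      rw [r1, r2, show j + (s + 1) = j + s + 1 by ring, show j + 1 + s = j + s + 1 by ring]
      rw [show (j + 1) ^ 2 + s * (j + 1) = (j ^ 2 + s * j) + j + (j + s + 1) by ring,
        show j ^ 2 + (s + 1) * j = (j ^ 2 + s * j) + j by ring,
        zpow_add₀ h0 _ (j + s + 1), zpow_add₀ h0 _ j]
      ring
    rw [tsum_congr this, s3.tsum_sub s4,
      tsum_shift (fun j => q ^ (j ^ 2 + s * j) * (RR q (j - 1) * RR q (j + s))) 1, sub_self]
  linear_combination -key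

lemma DD_eq {q : ℂ} (h0 : q ≠ 0) (h1 : ‖q‖ < 1) (s : ℤ) : DD q s = (qPochInf q q)⁻¹ := by
  have hall : ∀ s, DD q s = DD q 0 := by
    intro s
    induction s using Int.induction_on with
    | zero => rfl
    | succ n ih => rw [DD_step h0 h1, ih]
    | pred n ih => rw [← ih, ← DD_step h0 h1 (-(n:ℤ) - 1)]; congr 1; ring
  rw [hall]
  obtain ⟨C, hC, hR⟩ := RR2_bdd h1
  have hb : Summable fun j : ℤ => ‖q ^ (1 * j ^ 2 + 0 * j + 0) * (C : ℂ)‖ :=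
    summB h0 h1 1 0 0 le_rfl C (fun _ => (C : ℂ)) (fun c => by simp [abs_of_pos hC])
  have lim : Filter.Tendsto (fun N : ℕ => DD q (N : ℤ)) Filter.atTop
      (nhds (∑' j : ℤ, if j = 0 then (qPochInf q q)⁻¹ else 0)) := by
    unfold DD
    refine tendsto_tsum_of_dominated_convergence hb ?_ ?_
    · intro j
      rcases lt_trichotomy j 0 with h | h | h
      · simp [RR_neg _ h, h.ne]
      · subst h; simpa [RR_zero] using RR_tendsto h1
      · rw [if_neg h.ne']
        lift j to ℕ using h.le
        have t1 : Filter.Tendsto (fun N : ℕ => ((q ^ j) ^ N)) Filter.atTop (nhds 0) :=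
          tendsto_pow_atTop_nhds_zero_of_norm_lt_one (norm_pow_lt' h1 j (by omega))
        have t2 : Filter.Tendsto (fun N : ℕ => C * ‖q ^ ((j : ℤ) ^ 2)‖ * ‖(q ^ j) ^ N‖)
          Filter.atTop (nhds 0) := by simpa using t1.norm.const_mul (C * ‖q ^ ((j : ℤ) ^ 2)‖)
        refine squeeze_zero_norm (fun N => ?_) t2
        rw [zpow_add₀ h0, norm_mul, norm_mul]
        have e : q ^ ((N : ℤ) * j) = (q ^ j) ^ N := by
          rw [← pow_mul, ← zpow_natCast]; push_cast; ring_nf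
        rw [e]
        have := hR j (j + N)
        nlinarith [mul_nonneg (norm_nonneg (q ^ ((j : ℤ) ^ 2))) (norm_nonneg ((q ^ j) ^ N))]
    · refine Filter.Eventually.of_forall fun N j => ?_
      rcases lt_or_ge j 0 with h | h
      · rw [RR_neg _ h]; simpa using by positivity
      · have e : ‖(C : ℂ)‖ = C := by simp [abs_of_pos hC]
        rw [norm_mul, norm_mul _ (C : ℂ), e]
        refine mul_le_mul ?_ (hR _ _) (norm_nonneg _) (norm_nonneg _)
        rw [norm_zpow, norm_zpow]
        apply zpow_le_zpow_right_of_le_one₀ (norm_pos_iff.2 h0) h1.le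
        nlinarith [mul_nonneg (Int.natCast_nonneg N) h]
  rw [tsum_ite_eq] at lim
  exact tendsto_nhds_unique (tendsto_const_nhds.congr fun N : ℕ => (hall N).symm) lim

def shearE : ℤ × ℤ ≃ ℤ × ℤ where
  toFun x := (x.2 + x.1, x.2)
  invFun x := (x.1 - x.2, x.2)
  left_inv x := by ext <;> simp
  right_inv x := by ext <;> simp

lemma jtp {w : ℂ} (h0 : w ≠ 0) (h1 : ‖w‖ < 1) {z : ℂ} (hz : z ≠ 0) :
    ∑' n : ℤ, w ^ (n ^ 2 - n) * (-z) ^ n =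
      qPochInf z (w ^ 2) * qPochInf (w ^ 2 / z) (w ^ 2) * qPochInf (w ^ 2) (w ^ 2) := by
  have hz1 : -z ≠ 0 := neg_ne_zero.2 hz
  have hz2 : -(w ^ 2 / z) ≠ 0 := neg_ne_zero.2 (by positivity)
  have hw2 : w ^ 2 ≠ 0 := by positivity
  have hne := qPochInf_self_ne (norm_sq_lt h1)
  have A1 := euler h0 h1 hz1
  have A2 := euler h0 h1 hz2
  have S1 := euler_summ h0 h1 hz1
  have S2 := euler_summ h0 h1 hz2
  rw [neg_neg] at A1 A2
  rw [← A1, ← A2, tsum_mul_tsum_of_summable_norm S1 S2]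
  have S3 := summable_mul_of_summable_norm S1 S2
  have S4 := shearE.summable_iff.2 S3
  simp only [Function.comp_def] at S4
  rw [← shearE.tsum_eq, S4.tsum_prod, ← tsum_mul_right]
  refine tsum_congr fun s => ?_
  have D := DD_eq hw2 (norm_sq_lt h1) s
  have : ∀ j : ℤ, (w ^ ((shearE (s, j)).1 ^ 2 - (shearE (s, j)).1) * (-z) ^ (shearE (s, j)).1 * RR (w ^ 2) (shearE (s, j)).1) *
      (w ^ ((shearE (s, j)).2 ^ 2 - (shearE (s, j)).2) * (-(w ^ 2 / z)) ^ (shearE (s, j)).2 * RR (w ^ 2) (shearE (s, j)).2) =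
      (w ^ (s ^ 2 - s) * (-z) ^ s) * ((w ^ 2) ^ (j ^ 2 + s * j) * (RR (w ^ 2) j * RR (w ^ 2) (j + s))) := by
    intro j
    simp only [shearE, Equiv.coe_fn_mk]
    have e1 : (-(w ^ 2 / z)) ^ j = w ^ (2 * j) * ((-z) ^ j)⁻¹ := by
      rw [show -(w ^ 2 / z) = w ^ 2 * (-z)⁻¹ by rw [inv_neg]; ring, mul_zpow, sq_zpow, inv_zpow]
    have e2 : w ^ ((j + s) ^ 2 - (j + s)) = w ^ (s ^ 2 - s) * (w ^ 2) ^ (j ^ 2 + s * j) *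
        (w ^ (j ^ 2 - j) * w ^ (2 * j))⁻¹ := by
      rw [sq_zpow, ← zpow_add₀ h0, ← zpow_add₀ h0, ← zpow_neg, ← zpow_add₀ h0]; congr 1; ring
    rw [e1, e2, zpow_add₀ hz1]
    have := zpow_ne_zero j hz1
    have := zpow_ne_zero (j ^ 2 - j) h0
    have := zpow_ne_zero (2 * j) h0
    field_simp
  rw [tsum_congr this, tsum_mul_left]
  unfold DD at D
  rw [D]
  field_simp

lemma swap_sum {α β : Type*} (a : α → ℂ) (b : β → ℂ) (K : α → β → ℂ) (C : ℝ)
    (ha : Summable fun n => ‖a n‖) (hb : Summable fun n => ‖b n‖) (hK : ∀ n r, ‖K n r‖ ≤ C) :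
    ∑' n, a n * ∑' r, b r * K n r = ∑' r, b r * ∑' n, a n * K n r := by
  have hs : Summable (Function.uncurry fun n r => a n * (b r * K n r)) := by
    refine Summable.of_norm_bounded (g := fun x : α × β => ‖a x.1‖ * ‖b x.2‖ * C)
      ((ha.mul_of_nonneg hb (fun _ => norm_nonneg _) (fun _ => norm_nonneg _)).mul_right C) ?_
    rintro ⟨n, r⟩
    simp only [Function.uncurry, norm_mul]
    rw [mul_assoc]
    gcongr
    exact hK n r
  simp only [← tsum_mul_left]
  rw [← hs.tsum_comm]
  refine tsum_congr fun r => tsum_congr fun n => ?_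
  ring

lemma neg_one_zpow_norm (r : ℤ) : ‖(-1 : ℂ) ^ r‖ = 1 := by simp

noncomputable def SC (t : ℂ) (n : ℤ) : ℂ :=
  ∑' r : ℤ, ((-1) ^ r * (t ^ (r ^ 2 + r) + t ^ (r ^ 2 - r))) * (RR t (n - 2 * r) * RR t (n + 2 * r))

lemma bC_summ {t : ℂ} (h0 : t ≠ 0) (h1 : ‖t‖ < 1) :
    Summable fun r : ℤ => ‖(-1 : ℂ) ^ r * (t ^ (r ^ 2 + r) + t ^ (r ^ 2 - r))‖ := by
  have a1 := summB h0 h1 1 1 0 le_rfl 1 (fun r => (-1 : ℂ) ^ r) (fun r => by simp)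
  have a2 := summB h0 h1 1 (-1) 0 le_rfl 1 (fun r => (-1 : ℂ) ^ r) (fun r => by simp)
  refine Summable.of_nonneg_of_le (fun _ => norm_nonneg _) (fun r => ?_) (a1.add a2)
  refine le_trans (le_of_eq ?_) (norm_add_le _ _)
  congr 1
  rw [show 1 * r ^ 2 + 1 * r + 0 = r ^ 2 + r by ring, show 1 * r ^ 2 + -1 * r + 0 = r ^ 2 - r by ring]
  ring

lemma summ_mul_bdd {β : Type*} {b g : β → ℂ} {C : ℝ} (hb : Summable fun n => ‖b n‖)
    (hg : ∀ n, ‖g n‖ ≤ C) : Summable fun n => b n * g n :=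
  Summable.of_norm_bounded (hb.mul_right C) fun n => by
    rw [norm_mul]; gcongr; exact hg n

lemma SC_rec {t : ℂ} (h0 : t ≠ 0) (h1 : ‖t‖ < 1) (n : ℤ) :
    (1 - t ^ n) * (1 - t ^ (2 * n - 1)) * SC t n = t ^ (n - 1) * SC t (n - 1) := by
  obtain ⟨C, hC, hR⟩ := RR2_bdd h1
  have hb := bC_summ h0 h1
  have s1 := (summ_mul_bdd hb (fun r => hR (n - 2 * r) (n + 2 * r))).mul_left
    ((1 - t ^ n) * (1 - t ^ (2 * n - 1)))
  have s2 := (summ_mul_bdd hb (fun r => hR (n - 1 - 2 * r) (n - 1 + 2 * r))).mul_left (t ^ (n - 1))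
  have s3 : Summable fun r : ℤ => t ^ (1 * r ^ 2 + 1 * r + 0) *
      ((-1) ^ r * (RR t (n - 2 * r - 2) * RR t (n + 2 * r))) :=
    summB1 h0 h1 1 1 0 le_rfl C _ (fun r => by
      rw [norm_mul, neg_one_zpow_norm, one_mul]; exact hR _ _)
  have s4 := summ_shift s3 (-1)
  rw [← sub_eq_zero]
  unfold SC
  rw [← tsum_mul_left, ← tsum_mul_left, ← s1.tsum_sub s2]
  have key : ∀ r : ℤ, (1 - t ^ n) * (1 - t ^ (2 * n - 1)) *
      (((-1) ^ r * (t ^ (r ^ 2 + r) + t ^ (r ^ 2 - r))) * (RR t (n - 2 * r) * RR t (n + 2 * r))) -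
      t ^ (n - 1) * (((-1) ^ r * (t ^ (r ^ 2 + r) + t ^ (r ^ 2 - r))) *
        (RR t (n - 1 - 2 * r) * RR t (n - 1 + 2 * r))) =
      t ^ (1 * r ^ 2 + 1 * r + 0) * ((-1) ^ r * (RR t (n - 2 * r - 2) * RR t (n + 2 * r))) -
      t ^ (1 * (r + -1) ^ 2 + 1 * (r + -1) + 0) *
        ((-1) ^ (r + -1) * (RR t (n - 2 * (r + -1) - 2) * RR t (n + 2 * (r + -1)))) := by
    intro r
    have r1 := RR_step h1 (n - 2 * r)
    have r2 := RR_step h1 (n - 2 * r - 1)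
    have r3 := RR_step h1 (n + 2 * r)
    have r4 := RR_step h1 (n + 2 * r - 1)
    rw [show n - 1 - 2 * r = n - 2 * r - 1 by ring, show n - 1 + 2 * r = n + 2 * r - 1 by ring,
      show n - 2 * (r + -1) - 2 = n - 2 * r by ring,
      show n + 2 * (r + -1) = n + 2 * r - 1 - 1 by ring,
      show n - 2 * r - 2 = n - 2 * r - 1 - 1 by ring, r2, r4, r1, r3,
      show 1 * (r + -1) ^ 2 + 1 * (r + -1) + 0 = r ^ 2 - r by ring,
      show 1 * r ^ 2 + 1 * r + 0 = r ^ 2 + r by ring,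
      show n - 2 * r = n - r - r by ring, show n + 2 * r = n + r + r by ring,
      show 2 * n - 1 = n + n - 1 by ring,
      zpow_add₀ (by norm_num : (-1 : ℂ) ≠ 0)]
    simp only [zpow_sub₀ h0, zpow_add₀ h0, zpow_one]
    have hx := zpow_ne_zero r h0
    have hy := zpow_ne_zero n h0
    generalize t ^ r = x at *
    generalize t ^ n = y at *
    generalize t ^ r ^ 2 = a at *
    have : ((-1 : ℂ) ^ (-1 : ℤ)) = -1 := by norm_num
    rw [this]
    field_simp
    ring
  rw [tsum_congr key, s3.tsum_sub s4, tsum_shift (fun r : ℤ => t ^ (1 * r ^ 2 + 1 * r + 0) *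
      ((-1) ^ r * (RR t (n - 2 * r - 2) * RR t (n + 2 * r)))) (-1), sub_self]

lemma qPoch_ne {a p : ℂ} (h : ∀ n : ℕ, 1 - a * p ^ n ≠ 0) (n : ℕ) : qPoch a p n ≠ 0 := by
  rw [qPoch, Finset.prod_ne_zero_iff]; exact fun k _ => h k

lemma odd_ne {t : ℂ} (h1 : ‖t‖ < 1) (n : ℕ) : 1 - t * (t ^ 2) ^ n ≠ 0 := by
  rw [← pow_mul, ← pow_succ']; exact one_sub_pow_ne h1 _ (by omega)

lemma SC_eq {w : ℂ} (h0 : w ≠ 0) (h1 : ‖w‖ < 1) (n : ℕ) :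
    SC (w ^ 2) n = 2 * w ^ ((n : ℤ) ^ 2 - n) * RR (w ^ 2) n / qPoch (w ^ 2) ((w ^ 2) ^ 2) n := by
  have hp := norm_sq_lt h1
  have hw2 : w ^ 2 ≠ 0 := by positivity
  induction n with
  | zero =>
    unfold SC
    rw [tsum_eq_single 0]
    · simp [RR_zero]; norm_num
    · intro r hr
      rcases lt_or_gt_of_ne hr with h | h
      · rw [RR_neg (m := ((0:ℕ):ℤ) + 2 * r) _ (by omega)]; simp
      · rw [RR_neg (m := ((0:ℕ):ℤ) - 2 * r) _ (by omega)]; simp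
  | succ n ih =>
    have hr := SC_rec hw2 hp ((n : ℤ) + 1)
    have hs := RR_step hp ((n : ℤ) + 1)
    rw [add_sub_cancel_right] at hr hs
    rw [ih, hs] at hr
    have e1 : (1 - (w ^ 2) ^ ((n : ℤ) + 1)) ≠ 0 := by
      have := one_sub_pow_ne hp (n + 1) (by omega)
      rw [← zpow_natCast] at this; push_cast at this; exact this
    have e3 := odd_ne hp n
    have e2 : (w ^ 2) ^ (2 * ((n : ℤ) + 1) - 1) = w ^ 2 * ((w ^ 2) ^ 2) ^ n := by
      rw [← pow_mul (w ^ 2) 2 n, ← pow_succ', ← zpow_natCast (w ^ 2) (2 * n + 1)]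
      congr 1; push_cast; ring
    rw [e2] at hr
    push_cast
    rw [qPoch_succ]
    have e4 := qPoch_ne (odd_ne hp) n
    rw [show ((n : ℤ) + 1) ^ 2 - (n + 1) = ((n : ℤ) ^ 2 - n) + 2 * n by ring, zpow_add₀ h0,
      ← sq_zpow]
    rw [← mul_div_assoc, eq_div_iff e4] at hr
    rw [eq_div_iff (mul_ne_zero e4 e3)]
    apply mul_left_cancel₀ e1
    linear_combination hr

lemma slater46 {w : ℂ} (h0 : w ≠ 0) (h1 : ‖w‖ < 1) :
    ∑' n : ℕ, w ^ (3 * (n : ℤ) ^ 2 - n) * RR (w ^ 2) n / qPoch (w ^ 2) ((w ^ 2) ^ 2) n =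
    qPochInf ((w ^ 2) ^ 4) ((w ^ 2) ^ 10) * qPochInf ((w ^ 2) ^ 6) ((w ^ 2) ^ 10) *
      qPochInf ((w ^ 2) ^ 10) ((w ^ 2) ^ 10) / qPochInf (w ^ 2) (w ^ 2) := by
  have hp := norm_sq_lt h1
  have hw2 : w ^ 2 ≠ 0 := by positivity
  obtain ⟨C, hC, hR⟩ := RR2_bdd hp
  have e1 : ∀ n : ℕ, w ^ (3 * (n : ℤ) ^ 2 - n) * RR (w ^ 2) n / qPoch (w ^ 2) ((w ^ 2) ^ 2) n =
      2⁻¹ * ((w ^ 2) ^ ((n : ℤ) ^ 2) * SC (w ^ 2) n) := by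
    intro n
    rw [SC_eq h0 h1, sq_zpow, show 3 * (n : ℤ) ^ 2 - n = 2 * (n : ℤ) ^ 2 + (n ^ 2 - n) by ring,
      zpow_add₀ h0]
    ring
  rw [tsum_congr e1, tsum_mul_left]
  clear e1
  generalize w ^ 2 = t at *
  have e2 : ∑' n : ℕ, t ^ ((n : ℤ) ^ 2) * SC t n = ∑' n : ℤ, t ^ (n ^ 2) * SC t n := by
    rw [tsum_int_nat]
    intro m hm
    have : SC t m = 0 := by
      unfold SC
      rw [← tsum_zero]
      refine tsum_congr fun r => ?_
      rcases lt_or_ge r 0 with h | h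
      · rw [RR_neg (m := m + 2 * r) _ (by omega)]; simp
      · rw [RR_neg (m := m - 2 * r) _ (by omega)]; simp
    rw [this, mul_zero]
  rw [e2]
  unfold SC
  have ha : Summable fun n : ℤ => ‖t ^ (n ^ 2)‖ := by
    simpa using summB hw2 hp 1 0 0 le_rfl 1 (fun _ => 1) (by simp)
  rw [swap_sum (fun n : ℤ => t ^ (n ^ 2)) (fun r : ℤ => (-1) ^ r * (t ^ (r ^ 2 + r) + t ^ (r ^ 2 - r)))
    (fun n r => RR t (n - 2 * r) * RR t (n + 2 * r)) C ha (bC_summ hw2 hp) (fun n r => hR _ _)]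
  have e3 : ∀ r : ℤ, ∑' n : ℤ, t ^ (n ^ 2) * (RR t (n - 2 * r) * RR t (n + 2 * r)) =
      t ^ (4 * r ^ 2) * (qPochInf t t)⁻¹ := by
    intro r
    rw [← DD_eq hw2 hp (4 * r), DD, ← tsum_mul_left, ← tsum_shift _ (2 * r)]
    refine tsum_congr fun j => ?_
    rw [show j + 2 * r - 2 * r = j by ring, show j + 2 * r + 2 * r = j + 4 * r by ring,
      show (j + 2 * r) ^ 2 = 4 * r ^ 2 + (j ^ 2 + 4 * r * j) by ring, zpow_add₀ hw2]
    ring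
  have j0 : t ^ 5 ≠ 0 := by positivity
  have j1 := norm_pow_lt' hp 5 (by norm_num)
  have jt := jtp j0 j1 (z := t ^ 6) (by positivity)
  have e4 : ∀ r : ℤ, (t ^ 5) ^ (r ^ 2 - r) * (-t ^ 6) ^ r = t ^ (5 * r ^ 2 + 1 * r + 0) * (-1) ^ r := by
    intro r
    rw [← neg_one_mul, mul_zpow, pow_zpow', pow_zpow', mul_left_comm, ← zpow_add₀ hw2, mul_comm]
    congr 2; push_cast; ring
  have s5 := summB1 hw2 hp 5 1 0 (by norm_num) 1 (fun r => (-1 : ℂ) ^ r) (fun r => by simp)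
  have s6 := summB1 hw2 hp 5 (-1) 0 (by norm_num) 1 (fun r => (-1 : ℂ) ^ r) (fun r => by simp)
  rw [tsum_congr e4] at jt
  have e5 : ∑' r : ℤ, t ^ (5 * r ^ 2 + -1 * r + 0) * (-1 : ℂ) ^ r =
      ∑' r : ℤ, t ^ (5 * r ^ 2 + 1 * r + 0) * (-1 : ℂ) ^ r := by
    rw [← (Equiv.neg ℤ).tsum_eq]
    refine tsum_congr fun r => ?_
    simp only [Equiv.neg_apply]
    congr 1
    · congr 1; ring
    · rw [zpow_neg, ← inv_zpow]; norm_num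
  have e6 : ∀ r : ℤ, (-1 : ℂ) ^ r * (t ^ (r ^ 2 + r) + t ^ (r ^ 2 - r)) *
      ∑' n : ℤ, t ^ (n ^ 2) * (RR t (n - 2 * r) * RR t (n + 2 * r)) =
      (qPochInf t t)⁻¹ * (t ^ (5 * r ^ 2 + 1 * r + 0) * (-1 : ℂ) ^ r + t ^ (5 * r ^ 2 + -1 * r + 0) * (-1 : ℂ) ^ r) := by
    intro r
    rw [e3, show 5 * r ^ 2 + 1 * r + 0 = (r ^ 2 + r) + 4 * r ^ 2 by ring,
      show 5 * r ^ 2 + -1 * r + 0 = (r ^ 2 - r) + 4 * r ^ 2 by ring, zpow_add₀ hw2 _ (4 * r ^ 2),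
      zpow_add₀ hw2 _ (4 * r ^ 2)]
    ring
  rw [tsum_congr e6, tsum_mul_left, s5.tsum_add s6, e5, jt]
  rw [← pow_mul t 5 2, show (5 * 2) = 10 by norm_num, show t ^ 10 / t ^ 6 = t ^ 4 by field_simp]
  ring

noncomputable def WW (q : ℂ) (n r : ℤ) : ℂ := RR q (n - r) * RR q (n + r + 1)
noncomputable def ZZ (q : ℂ) (n r : ℤ) : ℂ := RR q (n - r) * RR q (n + r)

lemma WZ1 {q : ℂ} (h0 : q ≠ 0) (h1 : ‖q‖ < 1) (n r : ℤ) :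
    (1 - q ^ (2 * n + 1)) * WW q n r = ZZ q n r + q ^ (n + r + 1) * ZZ q n (r + 1) := by
  have r1 := RR_step h1 (n - r)
  have r2 := RR_step h1 (n + r + 1)
  rw [add_sub_cancel_right] at r2
  unfold WW ZZ
  rw [show n - (r + 1) = n - r - 1 by ring, ← add_assoc, r1, r2,
    show 2 * n + 1 = (n + r + 1) + (n - r) by ring, zpow_add₀ h0 (n + r + 1)]
  ring

lemma WZ2 {q : ℂ} (h0 : q ≠ 0) (h1 : ‖q‖ < 1) (n r : ℤ) :
    (1 - q ^ (2 * n + 1)) * WW q n r = ZZ q n (r + 1) + q ^ (n - r) * ZZ q n r := by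
  have r1 := RR_step h1 (n - r)
  have r2 := RR_step h1 (n + r + 1)
  rw [add_sub_cancel_right] at r2
  unfold WW ZZ
  rw [show n - (r + 1) = n - r - 1 by ring, ← add_assoc, r1, r2,
    show 2 * n + 1 = (n + r + 1) + (n - r) by ring, zpow_add₀ h0 (n + r + 1)]
  ring

lemma ZW1 {q : ℂ} (h0 : q ≠ 0) (h1 : ‖q‖ < 1) (n r : ℤ) :
    (1 - q ^ (2 * n)) * ZZ q n r = WW q (n - 1) r + q ^ (n - r) * WW q (n - 1) (r - 1) := by
  have r1 := RR_step h1 (n - r)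
  have r2 := RR_step h1 (n + r)
  unfold WW ZZ
  rw [show n - 1 - r = n - r - 1 by ring, show n - 1 - (r - 1) = n - r by ring,
    show n - 1 + r + 1 = n + r by ring, show n - 1 + (r - 1) + 1 = n + r - 1 by ring, r1, r2,
    show 2 * n = (n + r) + (n - r) by ring, zpow_add₀ h0 (n + r)]
  ring

lemma ZW2 {q : ℂ} (h0 : q ≠ 0) (h1 : ‖q‖ < 1) (n r : ℤ) :
    (1 - q ^ (2 * n)) * ZZ q n r = WW q (n - 1) (r - 1) + q ^ (n + r) * WW q (n - 1) r := by
  have r1 := RR_step h1 (n - r)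
  have r2 := RR_step h1 (n + r)
  unfold WW ZZ
  rw [show n - 1 - r = n - r - 1 by ring, show n - 1 - (r - 1) = n - r by ring,
    show n - 1 + r + 1 = n + r by ring, show n - 1 + (r - 1) + 1 = n + r - 1 by ring, r1, r2,
    show 2 * n = (n + r) + (n - r) by ring, zpow_add₀ h0 (n + r)]
  ring

lemma WW_bdd {p : ℂ} (hp : ‖p‖ < 1) : ∃ C : ℝ, 0 < C ∧ (∀ m n, ‖WW p m n‖ ≤ C) ∧
    (∀ m n, ‖ZZ p m n‖ ≤ C) := by
  obtain ⟨C, hC, h⟩ := RR2_bdd hp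
  exact ⟨C, hC, fun _ _ => h _ _, fun _ _ => h _ _⟩

noncomputable def TT (q : ℂ) (n : ℤ) : ℂ := ∑' c : ℤ,
  (q ^ (3 * c ^ 2 + 2 * c + 0) * (WW q n (3 * c) - WW q n (3 * c + 1)) +
   q ^ (3 * c ^ 2 + 4 * c + 1) * (WW q n (3 * c + 2) - WW q n (3 * c + 1)))

noncomputable def UU (q : ℂ) (n : ℤ) : ℂ := ∑' c : ℤ,
  (q ^ (3 * c ^ 2 + 1 * c + 0) * (ZZ q n (3 * c) - ZZ q n (3 * c + 1)) +
   q ^ (3 * c ^ 2 + (-1) * c + 0) * (ZZ q n (3 * c) - ZZ q n (3 * c - 1)))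

lemma sub_bdd {C : ℝ} {a b : ℂ} (ha : ‖a‖ ≤ C) (hb : ‖b‖ ≤ C) : ‖a - b‖ ≤ 2 * C := by
  refine (norm_sub_le _ _).trans (by linarith)

lemma TT_summ {q : ℂ} (h0 : q ≠ 0) (h1 : ‖q‖ < 1) (n : ℤ) : Summable fun c : ℤ =>
  (q ^ (3 * c ^ 2 + 2 * c + 0) * (WW q n (3 * c) - WW q n (3 * c + 1)) +
   q ^ (3 * c ^ 2 + 4 * c + 1) * (WW q n (3 * c + 2) - WW q n (3 * c + 1))) := by
  obtain ⟨C, hC, hW, hZ⟩ := WW_bdd h1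
  exact (summB1 h0 h1 3 2 0 (by norm_num) (2 * C) _ (fun c => sub_bdd (hW _ _) (hW _ _))).add
    (summB1 h0 h1 3 4 1 (by norm_num) (2 * C) _ (fun c => sub_bdd (hW _ _) (hW _ _)))

lemma UU_summ {q : ℂ} (h0 : q ≠ 0) (h1 : ‖q‖ < 1) (n : ℤ) : Summable fun c : ℤ =>
  (q ^ (3 * c ^ 2 + 1 * c + 0) * (ZZ q n (3 * c) - ZZ q n (3 * c + 1)) +
   q ^ (3 * c ^ 2 + (-1) * c + 0) * (ZZ q n (3 * c) - ZZ q n (3 * c - 1))) := by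
  obtain ⟨C, hC, hW, hZ⟩ := WW_bdd h1
  exact (summB1 h0 h1 3 1 0 (by norm_num) (2 * C) _ (fun c => sub_bdd (hZ _ _) (hZ _ _))).add
    (summB1 h0 h1 3 (-1) 0 (by norm_num) (2 * C) _ (fun c => sub_bdd (hZ _ _) (hZ _ _)))

lemma tele {h : ℤ → ℂ} (hs : Summable h) (k : ℤ) : HasSum (fun c => h (c + k) - h c) 0 := by
  have := (summ_shift hs k).hasSum.sub hs.hasSum
  rwa [tsum_shift, sub_self] at this

lemma TU {q : ℂ} (h0 : q ≠ 0) (h1 : ‖q‖ < 1) (n : ℤ) :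
    (1 - q ^ (2 * n + 1)) * TT q n = q ^ n * UU q n := by
  obtain ⟨C, hC, hW, hZ⟩ := WW_bdd h1
  have t1 := tele (summB1 h0 h1 3 1 0 (by norm_num) C _ (fun c => hZ n (3 * c))) 1
  have t2 := tele (summB1 h0 h1 3 (-1) 0 (by norm_num) C _ (fun c => hZ n (3 * c - 1))) 1
  have t3 := ((((UU_summ h0 h1 n).hasSum.add t1).sub t2).mul_left (q ^ n)).tsum_eq
  unfold TT
  rw [← tsum_mul_left]
  simp only [add_zero, sub_zero] at t3
  unfold UU
  simp only [add_zero]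
  rw [← t3]
  clear t1 t2 t3 hW hZ
  refine tsum_congr fun c => ?_
  have a1 := WZ2 h0 h1 n (3 * c)
  have a2 := WZ1 h0 h1 n (3 * c + 1)
  have a3 := WZ1 h0 h1 n (3 * c + 2)
  have a4 := WZ2 h0 h1 n (3 * c + 1)
  rw [show 3 * (c + 1) = 3 * c + 2 + 1 by ring, show 3 * c + 2 + 1 - 1 = 3 * c + 1 + 1 by ring]
  rw [show 3 * c + 2 = 3 * c + 1 + 1 by ring] at *
  have e1 : 3 * (c + 1) ^ 2 + 1 * (c + 1) = 3 * c ^ 2 + 7 * c + 4 := by ring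
  have e2 : 3 * (c + 1) ^ 2 + (-1) * (c + 1) = 3 * c ^ 2 + 5 * c + 2 := by ring
  rw [e1, e2]
  generalize (1 - q ^ (2 * n + 1)) = M at *
  simp only [zpow_sub₀ h0, zpow_add₀ h0, zpow_mul', zpow_ofNat, zpow_one, zpow_neg, zpow_zero] at a1 a2 a3 a4 ⊢
  have hx := zpow_ne_zero c h0
  generalize q ^ c = x at *
  generalize q ^ n = y at *
  generalize q ^ (c ^ 2) = a at *
  linear_combination (norm := skip) a ^ 3 * x ^ 2 * (a1 - a2) + a ^ 3 * x ^ 4 * q * (a3 - a4)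
  field_simp
  ring

lemma UT {q : ℂ} (h0 : q ≠ 0) (h1 : ‖q‖ < 1) (n : ℤ) :
    (1 - q ^ (2 * n)) * UU q n = q ^ n * TT q (n - 1) := by
  obtain ⟨C, hC, hW, hZ⟩ := WW_bdd h1
  have t1 := tele (summB1 h0 h1 3 (-2) 0 (by norm_num) C _ (fun c => hW (n - 1) (3 * c - 1))) 1
  have t2 := tele (summB1 h0 h1 3 (-4) 1 (by norm_num) C _ (fun c => hW (n - 1) (3 * c - 2))) 1
  have t3 := ((((TT_summ h0 h1 (n - 1)).hasSum.sub t1).add t2).mul_left (q ^ n)).tsum_eq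
  unfold UU
  rw [← tsum_mul_left]
  simp only [add_zero, sub_zero] at t3
  unfold TT
  simp only [add_zero]
  rw [← t3]
  clear t1 t2 t3 hW hZ
  refine tsum_congr fun c => ?_
  have a1 := ZW1 h0 h1 n (3 * c)
  have a2 := ZW2 h0 h1 n (3 * c + 1)
  have a3 := ZW2 h0 h1 n (3 * c)
  have a4 := ZW1 h0 h1 n (3 * c - 1)
  rw [show 3 * c + 1 - 1 = 3 * c by ring] at a2
  rw [show 3 * c - 1 - 1 = 3 * c - 2 by ring] at a4
  rw [show 3 * (c + 1) - 1 = 3 * c + 2 by ring, show 3 * (c + 1) - 2 = 3 * c + 1 by ring]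
  have e1 : 3 * (c + 1) ^ 2 + (-2) * (c + 1) = 3 * c ^ 2 + 4 * c + 1 := by ring
  have e2 : 3 * (c + 1) ^ 2 + (-4) * (c + 1) + 1 = 3 * c ^ 2 + 2 * c := by ring
  rw [e1, e2]
  generalize (1 - q ^ (2 * n)) = M at *
  simp only [zpow_sub₀ h0, zpow_add₀ h0, neg_mul, zpow_neg, zpow_mul', zpow_ofNat, zpow_one, zpow_zero] at a1 a2 a3 a4 ⊢
  have hx := zpow_ne_zero c h0
  generalize q ^ c = x at *
  generalize q ^ n = y at *
  generalize q ^ (c ^ 2) = a at *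
  linear_combination (norm := skip) a ^ 3 * x * (a1 - a2) + a ^ 3 * x⁻¹ * (a3 - a4)
  field_simp
  ring

lemma TU_eq {q : ℂ} (h0 : q ≠ 0) (h1 : ‖q‖ < 1) (n : ℕ) :
    UU q n = 2 * q ^ (n ^ 2) * RR q (2 * n) ∧ TT q n = 2 * q ^ (n ^ 2 + n) * RR q (2 * n + 1) := by
  have step : ∀ n : ℕ, UU q n = 2 * q ^ (n ^ 2) * RR q (2 * n) →
      TT q n = 2 * q ^ (n ^ 2 + n) * RR q (2 * n + 1) := by
    intro n h
    have a := TU h0 h1 n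
    have b := RR_step h1 (2 * n + 1)
    rw [add_sub_cancel_right] at b
    rw [h, b] at a
    have e : (1 - q ^ (2 * (n : ℤ) + 1)) ≠ 0 := by
      have := one_sub_pow_ne h1 (2 * n + 1) (by omega)
      rw [← zpow_natCast] at this; push_cast at this; exact this
    apply mul_left_cancel₀ e
    rw [a, pow_add, zpow_natCast]; ring
  have hU : UU q n = 2 * q ^ (n ^ 2) * RR q (2 * n) := by
    induction n with
    | zero =>
      unfold UU
      rw [tsum_eq_single 0]
      · simp [ZZ, RR_zero, RR_neg]; norm_num
      · intro c hc
        have hz : ∀ r : ℤ, r ≠ 0 → ZZ q ((0 : ℕ) : ℤ) r = 0 := by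
          intro r hr
          unfold ZZ
          rcases lt_or_gt_of_ne hr with h | h
          · rw [RR_neg (m := ((0:ℕ):ℤ) + r) _ (by omega)]; simp
          · rw [RR_neg (m := ((0:ℕ):ℤ) - r) _ (by omega)]; simp
        rw [hz _ (by omega), hz _ (by omega), hz _ (by omega)]; simp
    | succ n ih =>
      have a := UT h0 h1 (n + 1)
      have b := RR_step h1 (2 * n + 2)
      rw [show 2 * (n : ℤ) + 2 - 1 = 2 * n + 1 by ring] at b
      rw [add_sub_cancel_right, step n ih, b] at a
      have e : (1 - q ^ (2 * (n : ℤ) + 2)) ≠ 0 := by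
        have := one_sub_pow_ne h1 (2 * n + 2) (by omega)
        rw [← zpow_natCast] at this; push_cast at this; exact this
      apply mul_left_cancel₀ e
      push_cast
      rw [show 2 * ((n : ℤ) + 1) = 2 * n + 2 by ring] at a ⊢
      rw [a, show (n + 1) ^ 2 = (n ^ 2 + n) + n + 1 by ring, pow_succ q (n ^ 2 + n + n), pow_add q (n ^ 2 + n) n,
        zpow_add₀ h0 n 1, zpow_natCast, zpow_one]
      ring
  exact ⟨hU, step n hU⟩

lemma summN {u : ℂ} (h1 : ‖u‖ < 1) (C : ℝ) (g : ℕ → ℂ) (h : ∀ c, ‖g c‖ ≤ C) :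
    Summable fun n : ℕ => ‖u ^ ((n : ℤ) ^ 2) * g n‖ := by
  refine Summable.of_nonneg_of_le (fun _ => norm_nonneg _) (fun n => ?_)
    ((summable_geometric_of_lt_one (norm_nonneg u) h1).mul_right C)
  rw [norm_mul]
  have : ‖u ^ ((n : ℤ) ^ 2)‖ ≤ ‖u‖ ^ n := by
    rw [show ((n : ℤ) ^ 2) = ((n ^ 2 : ℕ) : ℤ) by push_cast; ring, zpow_natCast, norm_pow]
    exact pow_le_pow_of_le_one (norm_nonneg _) h1.le (Nat.le_self_pow (by norm_num) n)
  exact mul_le_mul this (h n) (norm_nonneg _) (by positivity)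

noncomputable def EP (u : ℂ) (r : ℤ) : ℂ :=
  ∑' n : ℕ, u ^ ((n : ℤ) ^ 2) * (qPoch (-u) (u ^ 2) n * ZZ (u ^ 2) n r)
noncomputable def EE (u : ℂ) (r : ℤ) : ℂ :=
  ∑' n : ℕ, u ^ ((n : ℤ) ^ 2) * (qPoch (-u) (u ^ 2) (n + 1) * WW (u ^ 2) n r)

lemma pb {u : ℂ} (h1 : ‖u‖ < 1) : ∃ C : ℝ, 0 < C ∧ (∀ n, ‖qPoch (-u) (u ^ 2) n‖ ≤ C) ∧
    (∀ n a b, ‖qPoch (-u) (u ^ 2) n * (RR (u ^ 2) a * RR (u ^ 2) b)‖ ≤ C) := by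
  have hp := norm_sq_lt h1
  obtain ⟨C, hC, h⟩ := seq_bdd (qPoch_tendsto (-u) hp)
  obtain ⟨D, hD, hh⟩ := RR2_bdd hp
  refine ⟨max C (C * D), by positivity, fun n => le_max_of_le_left (h n), fun n a b => le_max_of_le_right ?_⟩
  rw [norm_mul]
  exact mul_le_mul (h n) (hh _ _) (norm_nonneg _) hC.le

lemma g_tele {u : ℂ} (h1 : ‖u‖ < 1) (r : ℤ) : HasSum (fun n : ℕ =>
    u ^ ((n : ℤ) ^ 2) * (qPoch (-u) (u ^ 2) n * (RR (u ^ 2) (n - r - 1) * RR (u ^ 2) (n + r))) -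
    u ^ (((n + 1 : ℕ) : ℤ) ^ 2) * (qPoch (-u) (u ^ 2) (n + 1) *
      (RR (u ^ 2) ((n + 1 : ℕ) - r - 1) * RR (u ^ 2) ((n + 1 : ℕ) + r)))) 0 := by
  obtain ⟨C, hC, -, h⟩ := pb h1
  have s := (summN h1 C (fun n : ℕ => (qPoch (-u) (u ^ 2) n * (RR (u ^ 2) (n - r - 1) * RR (u ^ 2) (n + r))))
    (fun n => h _ _ _)).of_norm
  have s2 := (summable_nat_add_iff 1).2 s
  have hh := s.hasSum.sub s2.hasSum
  have : RR (u ^ 2) (-r - 1) * RR (u ^ 2) r = 0 := by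
    rcases lt_or_ge r 0 with h | h
    · rw [RR_neg _ h, mul_zero]
    · rw [RR_neg _ (by omega : -r - 1 < 0), zero_mul]
  have z : u ^ (((0 : ℕ) : ℤ) ^ 2) * (qPoch (-u) (u ^ 2) 0 *
      (RR (u ^ 2) (((0 : ℕ) : ℤ) - r - 1) * RR (u ^ 2) (((0 : ℕ) : ℤ) + r))) = 0 := by
    simp [this]
  rw [s.tsum_eq_zero_add, add_sub_cancel_right, z] at hh
  exact hh

lemma EP_summ {u : ℂ} (h1 : ‖u‖ < 1) (r : ℤ) : Summable fun n : ℕ =>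
    u ^ ((n : ℤ) ^ 2) * (qPoch (-u) (u ^ 2) n * ZZ (u ^ 2) n r) := by
  obtain ⟨C, hC, -, h⟩ := pb h1
  exact (summN h1 C _ (fun n => h _ _ _)).of_norm

lemma EE_summ {u : ℂ} (h1 : ‖u‖ < 1) (r : ℤ) : Summable fun n : ℕ =>
    u ^ ((n : ℤ) ^ 2) * (qPoch (-u) (u ^ 2) (n + 1) * WW (u ^ 2) n r) := by
  obtain ⟨C, hC, -, h⟩ := pb h1
  exact (summN h1 C _ (fun n => h _ _ _)).of_norm

lemma EP_step {u : ℂ} (h0 : u ≠ 0) (h1 : ‖u‖ < 1) (r : ℤ) :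
    EP u (r + 1) = u ^ (2 * r + 1) * EP u r := by
  have hp := norm_sq_lt h1
  have t := (g_tele h1 r).mul_left (u ^ (2 * r + 1) - 1)
  have s := ((EP_summ h1 r).hasSum.mul_left (u ^ (2 * r + 1))).sub (EP_summ h1 (r + 1)).hasSum
  rw [mul_zero] at t
  have := t.unique (s.congr_fun ?_)
  · unfold EP; linear_combination this
  intro n
  have r1 := RR_step hp (n - r)
  have r2 := RR_step hp (n + r + 1)
  rw [add_sub_cancel_right] at r2
  unfold ZZ
  push_cast
  rw [show (n : ℤ) - (r + 1) = n - r - 1 by ring, show (n : ℤ) + (r + 1) = n + r + 1 by ring,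
    show (n : ℤ) + 1 - r - 1 = n - r by ring, show (n : ℤ) + 1 + r = n + r + 1 by ring, r1, r2,
    qPoch_succ, show ((n : ℤ) + 1) ^ 2 = n ^ 2 + 2 * n + 1 by ring, ← zpow_natCast (u ^ 2) n]
  simp only [sq_zpow]
  simp only [zpow_sub₀ h0, zpow_add₀ h0, mul_add, mul_sub, zpow_mul', zpow_ofNat, zpow_one]
  have hx := zpow_ne_zero r h0
  generalize u ^ r = x at *
  generalize u ^ (n : ℤ) = y at *
  field_simp
  ring

lemma EE_eq {u : ℂ} (h0 : u ≠ 0) (h1 : ‖u‖ < 1) (r : ℤ) :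
    EE u r = EP u r + EP u (r + 1) := by
  have hp := norm_sq_lt h1
  have t := (g_tele h1 r).neg
  have s := (EE_summ h1 r).hasSum.sub ((EP_summ h1 r).hasSum.add (EP_summ h1 (r + 1)).hasSum)
  rw [neg_zero] at t
  have := t.unique (s.congr_fun ?_)
  · unfold EP EE; linear_combination -this
  intro n
  have r1 := RR_step hp (n - r)
  have r2 := RR_step hp (n + r + 1)
  rw [add_sub_cancel_right] at r2
  unfold ZZ WW
  push_cast
  rw [show (n : ℤ) - (r + 1) = n - r - 1 by ring, show (n : ℤ) + (r + 1) = n + r + 1 by ring,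
    show (n : ℤ) + 1 - r - 1 = n - r by ring, show (n : ℤ) + 1 + r = n + r + 1 by ring, r1, r2,
    qPoch_succ, show ((n : ℤ) + 1) ^ 2 = n ^ 2 + 2 * n + 1 by ring, ← zpow_natCast (u ^ 2) n]
  simp only [sq_zpow]
  simp only [zpow_sub₀ h0, zpow_add₀ h0, mul_add, mul_sub, zpow_mul', zpow_ofNat, zpow_one]
  have hx := zpow_ne_zero r h0
  generalize u ^ r = x at *
  generalize u ^ (n : ℤ) = y at *
  field_simp
  ring

lemma EP_pow {u : ℂ} (h0 : u ≠ 0) (h1 : ‖u‖ < 1) (r : ℤ) : EP u r = u ^ (r ^ 2) * EP u 0 := by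
  induction r using Int.induction_on with
  | zero => simp
  | succ n ih =>
    rw [EP_step h0 h1, ih, ← mul_assoc, ← zpow_add₀ h0]; congr 2; ring
  | pred n ih =>
    have := EP_step h0 h1 (-n - 1)
    rw [sub_add_cancel, ih] at this
    apply mul_left_cancel₀ (zpow_ne_zero (2 * (-(n : ℤ) - 1) + 1) h0)
    rw [← this, ← mul_assoc, ← zpow_add₀ h0]; congr 2; ring

lemma EP_zero {u : ℂ} (h0 : u ≠ 0) (h1 : ‖u‖ < 1) :
    EP u 0 = qPochInf (-u) (u ^ 2) * (qPochInf (u ^ 2) (u ^ 2))⁻¹ := by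
  have hp := norm_sq_lt h1
  obtain ⟨C, hC, -, hb⟩ := pb h1
  have key : ∀ N : ℕ, EP u 0 = ∑' i : ℕ, u ^ ((i : ℤ) ^ 2) * ((u ^ (2 * N)) ^ i *
      (qPoch (-u) (u ^ 2) (i + N) * (RR (u ^ 2) i * RR (u ^ 2) ((2 * N + i : ℕ) : ℤ)))) := by
    intro N
    apply mul_left_cancel₀ (zpow_ne_zero ((N : ℤ) ^ 2) h0)
    rw [← EP_pow h0 h1, ← tsum_mul_left]
    unfold EP
    rw [← (EP_summ h1 N).sum_add_tsum_nat_add N, Finset.sum_eq_zero, zero_add]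
    · refine tsum_congr fun i => ?_
      unfold ZZ
      push_cast
      rw [show (i : ℤ) + N - N = i by ring, show (i : ℤ) + N + N = 2 * N + i by ring,
        show ((i : ℤ) + N) ^ 2 = N ^ 2 + i ^ 2 + (2 * N * i : ℕ) by push_cast; ring,
        zpow_add₀ h0, zpow_add₀ h0, zpow_natCast u (2 * N * i), pow_mul u (2 * N)]
      ring
    · intro i hi
      have := Finset.mem_range.1 hi
      unfold ZZ
      rw [RR_neg (m := (i : ℤ) - N) _ (by omega)]; simp
  have lim := tendsto_tsum_of_dominated_convergence (𝓕 := Filter.atTop)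
    (f := fun N i : ℕ => u ^ ((i : ℤ) ^ 2) * ((u ^ (2 * N)) ^ i *
      (qPoch (-u) (u ^ 2) (i + N) * (RR (u ^ 2) i * RR (u ^ 2) ((2 * N + i : ℕ) : ℤ)))))
    (g := fun i : ℕ => if i = 0 then qPochInf (-u) (u ^ 2) * (qPochInf (u ^ 2) (u ^ 2))⁻¹ else 0)
    (summN h1 C (fun _ => (C : ℂ)) (fun _ => by simp [abs_of_pos hC])) ?_ ?_
  · rw [tsum_ite_eq] at lim
    refine tendsto_nhds_unique (tendsto_const_nhds.congr key) lim
  · intro i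
    have a1 := (qPoch_tendsto (-u) hp).comp (Filter.tendsto_add_atTop_nat i)
    have a2 : Filter.Tendsto (fun N : ℕ => 2 * N + i) Filter.atTop Filter.atTop :=
      Filter.tendsto_atTop_mono (fun N => by simp only [id]; omega) Filter.tendsto_id
    have a3 := (RR_tendsto hp).comp a2
    have a4 := ((a1.mul (a3.const_mul (RR (u ^ 2) i))))
    have a5 : Filter.Tendsto (fun N : ℕ => (u ^ (2 * N)) ^ i) Filter.atTop
        (nhds (if i = 0 then 1 else 0)) := by
      split_ifs with h
      · subst h; simp
      · have := ((tendsto_pow_atTop_nhds_zero_of_norm_lt_one (x := (u ^ 2) ^ i)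
          (norm_pow_lt' hp i h)))
        refine this.congr fun N => ?_
        rw [← pow_mul, ← pow_mul, ← pow_mul]; congr 1; ring
    have a6 := (a5.mul a4).const_mul (u ^ ((i : ℤ) ^ 2))
    simp only [Function.comp_def] at a6
    have e : (if i = 0 then qPochInf (-u) (u ^ 2) * (qPochInf (u ^ 2) (u ^ 2))⁻¹ else 0) =
      u ^ ((i : ℤ) ^ 2) * ((if i = 0 then 1 else 0) * (qPochInf (-u) (u ^ 2) *
        (RR (u ^ 2) i * (qPochInf (u ^ 2) (u ^ 2))⁻¹))) := by
      split_ifs with h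
      · subst h; simp [RR_zero]
      · simp
    rw [e]
    refine a6.congr fun N => ?_
    rw [add_comm N i]
  · refine Filter.Eventually.of_forall fun N i => ?_
    rw [norm_mul, norm_mul (u ^ ((i : ℤ) ^ 2)) (C : ℂ)]
    gcongr
    rw [norm_mul]
    have : ‖(u ^ (2 * N)) ^ i‖ ≤ 1 := by
      rw [← pow_mul, norm_pow]; exact pow_le_one₀ (norm_nonneg _) h1.le
    calc _ ≤ 1 * C := mul_le_mul this (hb _ _ _) (norm_nonneg _) zero_le_one
      _ = _ := by simp [abs_of_pos hC]

lemma swap_aux {α β : Type*} (a : α → ℂ) (b : β → ℂ) (K : α → β → ℂ) (C : ℝ)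
    (ha : Summable fun n => ‖a n‖) (hb : Summable fun n => ‖b n‖) (hK : ∀ n r, ‖K n r‖ ≤ C) :
    Summable (Function.uncurry fun n r => a n * (b r * K n r)) := by
  refine Summable.of_norm_bounded (g := fun x : α × β => ‖a x.1‖ * ‖b x.2‖ * C)
    ((ha.mul_of_nonneg hb (fun _ => norm_nonneg _) (fun _ => norm_nonneg _)).mul_right C) ?_
  rintro ⟨n, r⟩
  simp only [Function.uncurry, norm_mul]
  rw [mul_assoc]
  gcongr
  exact hK n r

lemma swap_sum2 {α β : Type*} (a : α → ℂ) (b b' : β → ℂ) (K K' : α → β → ℂ) (C : ℝ)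
    (ha : Summable fun n => ‖a n‖) (hb : Summable fun n => ‖b n‖) (hb' : Summable fun n => ‖b' n‖)
    (hK : ∀ n r, ‖K n r‖ ≤ C) (hK' : ∀ n r, ‖K' n r‖ ≤ C) :
    ∑' n, a n * ∑' r, (b r * K n r + b' r * K' n r) =
      ∑' r, ∑' n, (b r * (a n * K n r) + b' r * (a n * K' n r)) := by
  have hs := (swap_aux a b K C ha hb hK).add (swap_aux a b' K' C ha hb' hK')
  have hs' : Summable (Function.uncurry fun n r => a n * (b r * K n r + b' r * K' n r)) := by
    refine hs.congr ?_
    rintro ⟨n, r⟩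
    simp only [Function.uncurry]; ring
  simp only [← tsum_mul_left]
  rw [← hs'.tsum_comm]
  refine tsum_congr fun r => tsum_congr fun n => ?_
  ring

noncomputable def TH (u : ℂ) : ℂ :=
  ∑' c : ℤ, u ^ (15 * c ^ 2 + 4 * c + 0) - ∑' c : ℤ, u ^ (15 * c ^ 2 + 14 * c + 3)

lemma summ1 {q : ℂ} (h0 : q ≠ 0) (h1 : ‖q‖ < 1) (A B D : ℤ) (hA : 1 ≤ A) :
    Summable fun c : ℤ => q ^ (A * c ^ 2 + B * c + D) := by
  simpa using summB1 h0 h1 A B D hA 1 (fun _ => 1) (by simp)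

lemma summ1n {q : ℂ} (h0 : q ≠ 0) (h1 : ‖q‖ < 1) (A B D : ℤ) (hA : 1 ≤ A) :
    Summable fun c : ℤ => ‖q ^ (A * c ^ 2 + B * c + D)‖ := by
  simpa using summB h0 h1 A B D hA 1 (fun _ => 1) (by simp)

lemma slater97 {u : ℂ} (h0 : u ≠ 0) (h1 : ‖u‖ < 1) :
    ∑' n : ℕ, u ^ (3 * (n : ℤ) ^ 2 + 2 * n) * qPoch (-u) (u ^ 2) (n + 1) * RR (u ^ 2) (2 * n + 1) =
      qPochInf (-u) (u ^ 2) * (qPochInf (u ^ 2) (u ^ 2))⁻¹ * TH u := by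
  have hp := norm_sq_lt h1
  have hu2 : u ^ 2 ≠ 0 := by positivity
  obtain ⟨C, hC, hb, -⟩ := pb h1
  obtain ⟨D, hD, hW, -⟩ := WW_bdd hp
  have e1 : ∀ n : ℕ, u ^ (3 * (n : ℤ) ^ 2 + 2 * n) * qPoch (-u) (u ^ 2) (n + 1) * RR (u ^ 2) (2 * n + 1)
      = 2⁻¹ * ((u ^ ((n : ℤ) ^ 2) * qPoch (-u) (u ^ 2) (n + 1)) * TT (u ^ 2) n) := by
    intro n
    rw [(TU_eq hu2 hp n).2, ← zpow_natCast (u ^ 2), sq_zpow,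
      show 3 * (n : ℤ) ^ 2 + 2 * n = n ^ 2 + 2 * ((n ^ 2 + n : ℕ) : ℤ) by push_cast; ring,
      zpow_add₀ h0]
    ring
  rw [tsum_congr e1, tsum_mul_left]
  unfold TT
  rw [swap_sum2 (fun n : ℕ => u ^ ((n : ℤ) ^ 2) * qPoch (-u) (u ^ 2) (n + 1))
    (fun c : ℤ => (u ^ 2) ^ (3 * c ^ 2 + 2 * c + 0)) (fun c : ℤ => (u ^ 2) ^ (3 * c ^ 2 + 4 * c + 1))
    (fun n c => WW (u ^ 2) n (3 * c) - WW (u ^ 2) n (3 * c + 1))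
    (fun n c => WW (u ^ 2) n (3 * c + 2) - WW (u ^ 2) n (3 * c + 1)) (2 * D)
    (summN h1 C _ (fun n => hb _)) (summ1n hu2 hp _ _ _ (by norm_num)) (summ1n hu2 hp _ _ _ (by norm_num))
    (fun _ _ => sub_bdd (hW _ _) (hW _ _)) (fun _ _ => sub_bdd (hW _ _) (hW _ _))]
  have e2 : ∀ c : ℤ, ∑' n : ℕ, ((u ^ 2) ^ (3 * c ^ 2 + 2 * c + 0) *
      (u ^ ((n : ℤ) ^ 2) * qPoch (-u) (u ^ 2) (n + 1) * (WW (u ^ 2) n (3 * c) - WW (u ^ 2) n (3 * c + 1))) +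
      (u ^ 2) ^ (3 * c ^ 2 + 4 * c + 1) *
      (u ^ ((n : ℤ) ^ 2) * qPoch (-u) (u ^ 2) (n + 1) * (WW (u ^ 2) n (3 * c + 2) - WW (u ^ 2) n (3 * c + 1)))) =
      qPochInf (-u) (u ^ 2) * (qPochInf (u ^ 2) (u ^ 2))⁻¹ *
      (u ^ (15 * c ^ 2 + 4 * c + 0) - u ^ (15 * c ^ 2 + 16 * c + 4) +
        (u ^ (15 * c ^ 2 + 26 * c + 11) - u ^ (15 * c ^ 2 + 14 * c + 3))) := by
    intro c
    have s0 := (EE_summ h1 (3 * c)).hasSum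
    have s1 := (EE_summ h1 (3 * c + 1)).hasSum
    have s2 := (EE_summ h1 (3 * c + 2)).hasSum
    have s := ((s0.sub s1).mul_left ((u ^ 2) ^ (3 * c ^ 2 + 2 * c + 0))).add
      ((s2.sub s1).mul_left ((u ^ 2) ^ (3 * c ^ 2 + 4 * c + 1)))
    have s' := s.tsum_eq
    refine (tsum_congr fun n => ?_).trans (s'.trans ?_)
    · ring
    · have f := fun r => EE_eq h0 h1 r
      unfold EE at f
      rw [f, f, f, EP_pow h0 h1 (3 * c), EP_pow h0 h1 (3 * c + 1), EP_pow h0 h1 (3 * c + 1 + 1),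
        EP_pow h0 h1 (3 * c + 2), EP_pow h0 h1 (3 * c + 2 + 1), EP_zero h0 h1, sq_zpow, sq_zpow,
        show 15 * c ^ 2 + 4 * c + 0 = 2 * (3 * c ^ 2 + 2 * c + 0) + (3 * c) ^ 2 by ring,
        show 15 * c ^ 2 + 16 * c + 4 = 2 * (3 * c ^ 2 + 2 * c + 0) + (3 * c + 2) ^ 2 by ring,
        show 15 * c ^ 2 + 26 * c + 11 = 2 * (3 * c ^ 2 + 4 * c + 1) + (3 * c + 2 + 1) ^ 2 by ring,
        show 15 * c ^ 2 + 14 * c + 3 = 2 * (3 * c ^ 2 + 4 * c + 1) + (3 * c + 1) ^ 2 by ring,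
        zpow_add₀ h0, zpow_add₀ h0, zpow_add₀ h0, zpow_add₀ h0,
        show 3 * c + 1 + 1 = 3 * c + 2 by ring]
      ring
  rw [tsum_congr e2, tsum_mul_left]
  have t1 := summ1 h0 h1 15 4 0 (by norm_num)
  have t2 := summ1 h0 h1 15 16 4 (by norm_num)
  have t3 := summ1 h0 h1 15 26 11 (by norm_num)
  have t4 := summ1 h0 h1 15 14 3 (by norm_num)
  rw [(t1.sub t2).tsum_add (t3.sub t4), t1.tsum_sub t2, t3.tsum_sub t4]
  have r1 : ∑' c : ℤ, u ^ (15 * c ^ 2 + 26 * c + 11) = ∑' c : ℤ, u ^ (15 * c ^ 2 + 4 * c + 0) := by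
    rw [← (Equiv.subLeft (-1 : ℤ)).tsum_eq]
    refine tsum_congr fun c => ?_
    simp only [Equiv.subLeft_apply]
    congr 1; ring
  have r2 : ∑' c : ℤ, u ^ (15 * c ^ 2 + 16 * c + 4) = ∑' c : ℤ, u ^ (15 * c ^ 2 + 14 * c + 3) := by
    rw [← (Equiv.subLeft (-1 : ℤ)).tsum_eq]
    refine tsum_congr fun c => ?_
    simp only [Equiv.subLeft_apply]
    congr 1; ring
  rw [r1, r2]
  unfold TH
  ring

lemma tsum_mod3 {g : ℤ → ℂ} (hg : Summable g) : ∑' y : ℤ, g y =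
    ∑' d : ℤ, g (3 * d) + ∑' d : ℤ, g (3 * d + 1) + ∑' d : ℤ, g (3 * d - 1) := by
  have hs := (Int.divModEquiv 3).symm.summable_iff.2 hg
  rw [← (Int.divModEquiv 3).symm.tsum_eq]
  have hc : ∀ k : Fin 3, Summable fun d : ℤ => g ((Int.divModEquiv 3).symm (d, k)) := by
    intro k
    exact hs.comp_injective (i := fun d : ℤ => (d, k)) (fun a b h => by simpa using h)
  have := hs.tsum_prod
  simp only [Function.comp_def] at this
  rw [this]
  simp only [tsum_fintype, Fin.sum_univ_three]
  rw [((hc 0).add (hc 1)).tsum_add (hc 2), (hc 0).tsum_add (hc 1)]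
  congr 1
  · congr 1
    · refine tsum_congr fun d => ?_
      congr 1; simp [Int.divModEquiv]; ring
    · refine tsum_congr fun d => ?_
      congr 1; simp [Int.divModEquiv]; ring
  · rw [← tsum_shift (fun d : ℤ => g (3 * d - 1)) 1]
    refine tsum_congr fun d => ?_
    congr 1; simp [Int.divModEquiv]; ring

lemma trisect {p : ℂ} (hp : ‖p‖ < 1) :
    qPochInf p p = qPochInf (p ^ 2) (p ^ 3) * qPochInf p (p ^ 3) * qPochInf (p ^ 3) (p ^ 3) := by
  have h3 := norm_pow_lt' hp 3 (by norm_num)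
  have a := (qPoch_tendsto p hp).comp (Filter.tendsto_id.const_mul_atTop' (r := 3) (by norm_num))
  have b := ((qPoch_tendsto (p ^ 2) h3).mul (qPoch_tendsto p h3)).mul (qPoch_tendsto (p ^ 3) h3)
  refine tendsto_nhds_unique a (b.congr fun n => ?_)
  simp only [Function.comp, id]
  induction n with
  | zero => simp
  | succ n ih =>
    rw [show 3 * (n + 1) = 3 * n + 1 + 1 + 1 by ring]
    simp only [qPoch_succ]
    rw [← ih]
    ring

lemma neg1 (y : ℤ) (k : ℤ) (h : Even (y - k)) : (-1 : ℂ) ^ y = (-1) ^ k := by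
  obtain ⟨c, hc⟩ := h
  rw [show y = k + (c + c) by omega, zpow_add₀ (by norm_num), Even.neg_one_zpow ⟨c, rfl⟩, mul_one]

lemma quint {u : ℂ} (h0 : u ≠ 0) (h1 : ‖u‖ < 1) :
    TH u * qPochInf (u ^ 20) (u ^ 20) =
      (qPochInf (u ^ 3) (u ^ 10) * qPochInf (u ^ 7) (u ^ 10) * qPochInf (u ^ 10) (u ^ 10)) *
      (qPochInf (u ^ 4) (u ^ 20) * qPochInf (u ^ 16) (u ^ 20) * qPochInf (u ^ 20) (u ^ 20)) := by
  have jt : ∀ k l : ℕ, k ≠ 0 → ∑' n : ℤ, u ^ ((k : ℤ) * n ^ 2 + (l - k : ℤ) * n + 0) * (-1) ^ n =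
      qPochInf (u ^ l) (u ^ (k * 2)) * qPochInf (u ^ (k * 2) / u ^ l) (u ^ (k * 2)) *
      qPochInf (u ^ (k * 2)) (u ^ (k * 2)) := by
    intro k l hk
    have := jtp (w := u ^ k) (z := u ^ l) (by positivity) (norm_pow_lt' h1 k hk) (by positivity)
    rw [← pow_mul] at this
    rw [← this]
    refine tsum_congr fun r => ?_
    rw [← neg_one_mul (u ^ l), mul_zpow, pow_zpow', pow_zpow', mul_left_comm, ← zpow_add₀ h0, mul_comm]
    congr 2; ring
  have hA := jt 5 7 (by norm_num)
  have hB := jt 10 4 (by norm_num)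
  have hP := jt 30 40 (by norm_num)
  norm_num at hA hB hP
  rw [show u ^ 10 / u ^ 7 = u ^ 3 by field_simp] at hA
  rw [show u ^ 20 / u ^ 4 = u ^ 16 by field_simp] at hB
  rw [show u ^ 60 / u ^ 40 = u ^ 20 by field_simp] at hP
  have tri := trisect (norm_pow_lt' h1 20 (by norm_num))
  rw [← pow_mul, ← pow_mul] at tri
  norm_num at tri
  rw [← tri] at hP
  rw [mul_comm (qPochInf (u ^ 3) (u ^ 10)), ← hA, ← hB, ← hP]
  have sA := summB h0 h1 5 2 0 (by norm_num) 1 (fun r => (-1 : ℂ) ^ r) (fun r => by simp)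
  have sB := summB h0 h1 10 (-6) 0 (by norm_num) 1 (fun r => (-1 : ℂ) ^ r) (fun r => by simp)
  simp only [add_zero, neg_mul] at sA sB
  have sAB := summable_mul_of_summable_norm sA sB
  have sE := shearE.summable_iff.2 sAB
  rw [tsum_mul_tsum_of_summable_norm sA sB, ← shearE.tsum_eq]
  refine Eq.trans ?_ sE.tsum_prod.symm
  have sG := sE.prod
  have fc : ∀ y c : ℤ, ((fun x : ℤ × ℤ => u ^ (5 * x.1 ^ 2 + 2 * x.1) * (-1 : ℂ) ^ x.1 *
      (u ^ (10 * x.2 ^ 2 + -(6 * x.2)) * (-1) ^ x.2)) ∘ shearE) (y, c) =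
      (-1) ^ y * u ^ (15 * c ^ 2 + 10 * c * y + 5 * y ^ 2 + 2 * y - 4 * c) := by
    intro y c
    simp only [Function.comp, shearE, Equiv.coe_fn_mk]
    rw [mul_mul_mul_comm, ← zpow_add₀ h0, ← zpow_add₀ (by norm_num : (-1 : ℂ) ≠ 0), mul_comm,
      neg1 (c + y + c) y ⟨c, by ring⟩]
    congr 2; ring
  have g0 : ∀ d : ℤ, ∑' c : ℤ, ((fun x : ℤ × ℤ => u ^ (5 * x.1 ^ 2 + 2 * x.1) * (-1 : ℂ) ^ x.1 *
      (u ^ (10 * x.2 ^ 2 + -(6 * x.2)) * (-1) ^ x.2)) ∘ shearE) (3 * d, c) =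
      u ^ (30 * d ^ 2 + 10 * d) * (-1) ^ d * ∑' c : ℤ, u ^ (15 * c ^ 2 + 4 * c + 0) := by
    intro d
    rw [← tsum_mul_left, ← (Equiv.subLeft (-d)).tsum_eq]
    refine tsum_congr fun c => ?_
    rw [fc, neg1 (3 * d) d ⟨d, by ring⟩, mul_comm _ ((-1 : ℂ) ^ d), mul_assoc ((-1 : ℂ) ^ _), ← zpow_add₀ h0,
      Equiv.subLeft_apply]
    congr 2; ring
  have g1 : ∀ d : ℤ, ∑' c : ℤ, ((fun x : ℤ × ℤ => u ^ (5 * x.1 ^ 2 + 2 * x.1) * (-1 : ℂ) ^ x.1 *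
      (u ^ (10 * x.2 ^ 2 + -(6 * x.2)) * (-1) ^ x.2)) ∘ shearE) (3 * d + 1, c) =
      (-1) ^ (d + 1) * u ^ (30 * d ^ 2 + 30 * d + 7) * ∑' c : ℤ, u ^ (15 * c ^ 2 - 6 * c) := by
    intro d
    rw [← tsum_mul_left, ← (Equiv.subLeft (-d)).tsum_eq]
    refine tsum_congr fun c => ?_
    rw [fc, neg1 (3 * d + 1) (d + 1) ⟨d, by ring⟩, mul_assoc ((-1 : ℂ) ^ _), ← zpow_add₀ h0,
      Equiv.subLeft_apply]
    congr 2; ring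
  have g2 : ∀ d : ℤ, ∑' c : ℤ, ((fun x : ℤ × ℤ => u ^ (5 * x.1 ^ 2 + 2 * x.1) * (-1 : ℂ) ^ x.1 *
      (u ^ (10 * x.2 ^ 2 + -(6 * x.2)) * (-1) ^ x.2)) ∘ shearE) (3 * d - 1, c) =
      (-1) ^ (d + 1) * u ^ (30 * d ^ 2 - 10 * d) * ∑' c : ℤ, u ^ (15 * c ^ 2 + 14 * c + 3) := by
    intro d
    rw [← tsum_mul_left, ← (Equiv.subLeft (-d)).tsum_eq]
    refine tsum_congr fun c => ?_
    rw [fc, neg1 (3 * d - 1) (d + 1) ⟨d - 1, by ring⟩, mul_assoc ((-1 : ℂ) ^ _), ← zpow_add₀ h0,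
      Equiv.subLeft_apply]
    congr 2; ring
  rw [tsum_mod3 sG, tsum_congr g0, tsum_congr g1, tsum_congr g2, tsum_mul_right, tsum_mul_right,
    tsum_mul_right]
  have z1 : ∑' d : ℤ, (-1 : ℂ) ^ (d + 1) * u ^ (30 * d ^ 2 + 30 * d + 7) = 0 := by
    have : ∑' d : ℤ, (-1 : ℂ) ^ (d + 1) * u ^ (30 * d ^ 2 + 30 * d + 7) =
        -∑' d : ℤ, (-1 : ℂ) ^ (d + 1) * u ^ (30 * d ^ 2 + 30 * d + 7) := by
      conv_lhs => rw [← (Equiv.subLeft (-1 : ℤ)).tsum_eq]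
      rw [← tsum_neg]
      refine tsum_congr fun d => ?_
      rw [Equiv.subLeft_apply, neg1 (-1 - d + 1) d ⟨-d, by ring⟩, zpow_add₀ (by norm_num) d 1,
        zpow_one, mul_neg_one, neg_mul, neg_neg]
      congr 2; ring
    exact self_eq_neg.1 this
  have z2 : ∑' d : ℤ, (-1 : ℂ) ^ (d + 1) * u ^ (30 * d ^ 2 - 10 * d) =
      -∑' d : ℤ, u ^ (30 * d ^ 2 + 10 * d) * (-1) ^ d := by
    rw [← (Equiv.neg ℤ).tsum_eq, ← tsum_neg]
    refine tsum_congr fun d => ?_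
    rw [Equiv.neg_apply, neg1 (-d + 1) (d + 1) ⟨-d, by ring⟩, zpow_add₀ (by norm_num) d 1,
        zpow_one, mul_neg_one, neg_mul, mul_comm]
    congr 3; ring
  rw [z1, z2]
  unfold TH
  ring

lemma bisect {p : ℂ} (hp : ‖p‖ < 1) :
    qPochInf p (p ^ 2) * qPochInf (p ^ 2) (p ^ 2) = qPochInf p p := by
  have h3 := norm_pow_lt' hp 2 (by norm_num)
  have a := (qPoch_tendsto p hp).comp (Filter.tendsto_id.const_mul_atTop' (r := 2) (by norm_num))
  have b := ((qPoch_tendsto p h3).mul (qPoch_tendsto (p ^ 2) h3))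
  refine tendsto_nhds_unique b (a.congr fun n => ?_)
  simp only [Function.comp, id]
  induction n with
  | zero => simp
  | succ n ih =>
    rw [show 2 * (n + 1) = 2 * n + 1 + 1 by ring]
    simp only [qPoch_succ]
    rw [ih]
    ring

lemma negmul (a : ℂ) {p : ℂ} (hp : ‖p‖ < 1) :
    qPochInf (-a) p * qPochInf a p = qPochInf (a ^ 2) (p ^ 2) := by
  have h3 := norm_pow_lt' hp 2 (by norm_num)
  have b := ((qPoch_tendsto (-a) hp).mul (qPoch_tendsto a hp))
  refine tendsto_nhds_unique b ((qPoch_tendsto (a ^ 2) h3).congr fun n => ?_)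
  unfold qPoch
  rw [← Finset.prod_mul_distrib]
  refine Finset.prod_congr rfl fun k _ => ?_
  ring

lemma poch2 (Q : ℂ) (m : ℕ) : qPoch Q Q (2 * m) = qPoch Q (Q ^ 2) m * qPoch Q Q m * qPoch (-Q) Q m := by
  induction m with
  | zero => simp
  | succ n ih =>
    rw [show 2 * (n + 1) = 2 * n + 1 + 1 by ring]
    simp only [qPoch_succ]
    rw [ih]
    ring

noncomputable def aa (u : ℂ) (s : ℤ) : ℂ := qPochInf (-u ^ s) (u ^ 2)

lemma aa_step {u : ℂ} (h0 : u ≠ 0) (h1 : ‖u‖ < 1) (s : ℤ) :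
    aa u s = (1 + u ^ s) * aa u (s + 2) := by
  unfold aa
  rw [qPochInf_split (-u ^ s) (norm_sq_lt h1) 1, zpow_add₀ h0]
  simp only [qPoch, Finset.prod_range_one]
  rw [pow_one, pow_zero, zpow_ofNat]
  congr 1
  · ring
  · congr 1; ring

lemma one_add_ne {u : ℂ} (h1 : ‖u‖ < 1) (n : ℕ) : 1 + u ^ n ≠ 0 := by
  rcases Nat.eq_zero_or_pos n with h | h
  · subst h; norm_num
  · have := one_sub_ne (q := -u ^ n) (by rw [norm_neg]; exact norm_pow_lt' h1 n (by omega))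
    rwa [sub_neg_eq_add] at this

lemma even_prod {u : ℂ} (h0 : u ≠ 0) (h1 : ‖u‖ < 1) (m : ℕ) :
    aa u (-(2 * m)) * aa u (2 - 2 * m) * aa u (2 * m) =
      4 * aa u 2 ^ 3 * u ^ (-(2 * (m : ℤ) ^ 2)) * qPoch (-u ^ 2) (u ^ 2) m := by
  induction m with
  | zero =>
    have := aa_step h0 h1 0
    simp at this ⊢
    rw [this]; ring
  | succ m ih =>
    have a1 := aa_step h0 h1 (-(2 * m) - 2)
    have a2 := aa_step h0 h1 (-(2 * m))
    have a3 := aa_step h0 h1 (2 * m)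
    have hne := one_add_ne h1 (2 * m)
    push_cast
    rw [show -(2 * ((m : ℤ) + 1)) = -(2 * m) - 2 by ring,
      show 2 - 2 * ((m : ℤ) + 1) = -(2 * m) by ring, show 2 * ((m : ℤ) + 1) = 2 * m + 2 by ring,
      a1, sub_add_cancel, qPoch_succ,
      show -(2 * ((m : ℤ) + 1) ^ 2) = -(2 * m ^ 2) + (-(2 * m)) + (-(2 * m) - 2) by ring]
    rw [show -(2 * (m : ℤ)) + 2 = 2 - 2 * m by ring] at a2
    have e : u ^ (2 * (m : ℤ)) = u ^ (2 * m) := by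
      rw [← zpow_natCast]; push_cast; rfl
    rw [e] at a3
    apply mul_left_cancel₀ hne
    rw [zpow_add₀ h0, zpow_add₀ h0 _ (-(2 * (m : ℤ)))]
    have e2 : u ^ (-(2 * (m : ℤ)) - 2) = (u ^ (2 * m))⁻¹ * (u ^ 2)⁻¹ := by
      rw [sub_eq_add_neg, zpow_add₀ h0, zpow_neg, e, zpow_neg]; norm_cast
    have e3 : u ^ (-(2 * (m : ℤ))) = (u ^ (2 * m))⁻¹ := by rw [zpow_neg, e]
    rw [e3] at a2
    have e4 : (u ^ 2) ^ m = u ^ (2 * m) := by rw [← pow_mul]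
    rw [e2, e3, e4]
    have hx : u ^ (2 * m) ≠ 0 := pow_ne_zero _ h0
    generalize u ^ (2 * m) = x at *
    rw [a3] at ih
    linear_combination (norm := skip) (1 + x⁻¹ * (u ^ 2)⁻¹) * (1 + x⁻¹) * ih +
      (1 + x) * (1 + x⁻¹ * (u ^ 2)⁻¹) * aa u (-(2 * m)) * aa u (2 * m + 2) * a2
    field_simp
    ring

lemma odd_prod {u : ℂ} (h0 : u ≠ 0) (h1 : ‖u‖ < 1) (m : ℕ) :
    aa u (-(2 * m + 1)) * aa u (2 - (2 * m + 1)) * aa u (2 * m + 1) =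
      aa u 1 ^ 3 * u ^ (-(2 * (m : ℤ) ^ 2 + 2 * m + 1)) * qPoch (-u) (u ^ 2) (m + 1) := by
  induction m with
  | zero =>
    have := aa_step h0 h1 (-1)
    norm_num at this
    norm_num [qPoch]
    rw [this]
    field_simp
    ring
  | succ m ih =>
    have a1 := aa_step h0 h1 (-(2 * m + 1) - 2)
    have a2 := aa_step h0 h1 (-(2 * m + 1))
    have a3 := aa_step h0 h1 (2 * m + 1)
    have hne := one_add_ne h1 (2 * m + 1)
    push_cast
    rw [show -(2 * ((m : ℤ) + 1) + 1) = -(2 * m + 1) - 2 by ring,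
      show 2 - (2 * ((m : ℤ) + 1) + 1) = -(2 * m + 1) by ring,
      show 2 * ((m : ℤ) + 1) + 1 = 2 * m + 1 + 2 by ring,
      a1, sub_add_cancel, qPoch_succ _ _ (m + 1),
      show -(2 * ((m : ℤ) + 1) ^ 2 + 2 * ((m : ℤ) + 1) + 1) =
        -(2 * m ^ 2 + 2 * m + 1) + (-(2 * m + 1)) + (-(2 * m + 1) - 2) by ring]
    rw [show -(2 * (m : ℤ) + 1) + 2 = 2 - (2 * m + 1) by ring] at a2
    have e : u ^ (2 * (m : ℤ) + 1) = u ^ (2 * m + 1) := by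
      rw [← zpow_natCast]; push_cast; rfl
    rw [e] at a3
    apply mul_left_cancel₀ hne
    rw [zpow_add₀ h0, zpow_add₀ h0 _ (-(2 * (m : ℤ) + 1))]
    have e2 : u ^ (-(2 * (m : ℤ) + 1) - 2) = (u ^ (2 * m + 1))⁻¹ * (u ^ 2)⁻¹ := by
      rw [sub_eq_add_neg, zpow_add₀ h0, zpow_neg, e, zpow_neg]; norm_cast
    have e3 : u ^ (-(2 * (m : ℤ) + 1)) = (u ^ (2 * m + 1))⁻¹ := by rw [zpow_neg, e]
    rw [e3] at a2
    have e4 : -u * (u ^ 2) ^ (m + 1) = -(u ^ (2 * m + 1) * u ^ 2) := by ring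
    rw [e2, e3, e4]
    have hx : u ^ (2 * m + 1) ≠ 0 := pow_ne_zero _ h0
    generalize u ^ (2 * m + 1) = x at *
    rw [a3] at ih
    linear_combination (norm := skip) (1 + x⁻¹ * (u ^ 2)⁻¹) * (1 + x⁻¹) * ih +
      (1 + x) * (1 + x⁻¹ * (u ^ 2)⁻¹) * aa u (-(2 * m + 1)) * aa u (2 * m + 1 + 2) * a2
    field_simp
    ring

lemma even_term {q : ℂ} (h0 : q ≠ 0) (h1 : ‖q‖ < 1) (m : ℕ) :
    q ^ (5 * ((2 * m : ℕ) : ℤ) ^ 2 - 2 * ((2 * m : ℕ) : ℤ)) * RR ((q ^ 4) ^ 2) ((2 * m : ℕ) : ℤ) *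
      (aa (q ^ 4) (-((2 * m : ℕ) : ℤ)) * aa (q ^ 4) (2 - ((2 * m : ℕ) : ℤ)) * aa (q ^ 4) ((2 * m : ℕ) : ℤ)) =
    4 * aa (q ^ 4) 2 ^ 3 * ((q ^ 4) ^ (3 * (m : ℤ) ^ 2 - m) * RR ((q ^ 4) ^ 2) m /
      qPoch ((q ^ 4) ^ 2) (((q ^ 4) ^ 2) ^ 2) m) := by
  have u0 : q ^ 4 ≠ 0 := by positivity
  have u1 := norm_pow_lt' h1 4 (by norm_num)
  have hp := norm_sq_lt u1
  rw [RR_nat, RR_nat, poch2]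
  push_cast
  rw [even_prod u0 u1, show 5 * (2 * (m : ℤ)) ^ 2 - 2 * (2 * (m : ℤ)) =
    4 * (3 * m ^ 2 - m) + 4 * (2 * m ^ 2) by ring, zpow_add₀ h0, zpow_neg]
  have e1 : q ^ (4 * (3 * (m : ℤ) ^ 2 - m)) = (q ^ 4) ^ (3 * (m : ℤ) ^ 2 - m) := by
    rw [pow_zpow']; norm_cast
  have e2 : q ^ (4 * (2 * (m : ℤ) ^ 2)) = (q ^ 4) ^ (2 * (m : ℤ) ^ 2) := by
    rw [pow_zpow']; norm_cast
  rw [e1, e2]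
  have hz := zpow_ne_zero (2 * (m : ℤ) ^ 2) u0
  have n1 := qPoch_self_ne hp m
  have n2 := qPoch_ne (odd_ne hp) m
  have n3 : qPoch (-(q ^ 4) ^ 2) ((q ^ 4) ^ 2) m ≠ 0 := by
    apply qPoch_ne
    intro n
    have := one_add_ne hp (n + 1)
    rw [pow_succ'] at this
    rwa [neg_mul, sub_neg_eq_add]
  generalize (q ^ 4) ^ (2 * (m : ℤ) ^ 2) = z at *
  generalize (q ^ 4) ^ (3 * (m : ℤ) ^ 2 - m) = y at *
  generalize qPoch (-(q ^ 4) ^ 2) ((q ^ 4) ^ 2) m = A at *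
  generalize qPoch ((q ^ 4) ^ 2) ((q ^ 4) ^ 2) m = B at *
  generalize qPoch ((q ^ 4) ^ 2) (((q ^ 4) ^ 2) ^ 2) m = D at *
  generalize aa (q ^ 4) 2 = F at *
  field_simp

lemma odd_term {q : ℂ} (h0 : q ≠ 0) (h1 : ‖q‖ < 1) (m : ℕ) :
    q ^ (5 * ((2 * m + 1 : ℕ) : ℤ) ^ 2 - 2 * ((2 * m + 1 : ℕ) : ℤ)) * RR ((q ^ 4) ^ 2) ((2 * m + 1 : ℕ) : ℤ) *
      (aa (q ^ 4) (-((2 * m + 1 : ℕ) : ℤ)) * aa (q ^ 4) (2 - ((2 * m + 1 : ℕ) : ℤ)) *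
        aa (q ^ 4) ((2 * m + 1 : ℕ) : ℤ)) =
    q ^ (-1 : ℤ) * aa (q ^ 4) 1 ^ 3 * ((q ^ 4) ^ (3 * (m : ℤ) ^ 2 + 2 * m) * qPoch (-q ^ 4) ((q ^ 4) ^ 2) (m + 1) *
      RR ((q ^ 4) ^ 2) (2 * m + 1)) := by
  have u0 : q ^ 4 ≠ 0 := by positivity
  have u1 := norm_pow_lt' h1 4 (by norm_num)
  push_cast
  rw [odd_prod u0 u1, show 5 * (2 * (m : ℤ) + 1) ^ 2 - 2 * (2 * (m : ℤ) + 1) =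
    -1 + 4 * (3 * m ^ 2 + 2 * m) + 4 * (2 * m ^ 2 + 2 * m + 1) by ring, zpow_add₀ h0, zpow_add₀ h0 (-1),
    zpow_neg (q ^ 4)]
  have e1 : q ^ (4 * (3 * (m : ℤ) ^ 2 + 2 * m)) = (q ^ 4) ^ (3 * (m : ℤ) ^ 2 + 2 * m) := by
    rw [pow_zpow']; norm_cast
  have e2 : q ^ (4 * (2 * (m : ℤ) ^ 2 + 2 * m + 1)) = (q ^ 4) ^ (2 * (m : ℤ) ^ 2 + 2 * m + 1) := by
    rw [pow_zpow']; norm_cast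
  rw [e1, e2]
  have hz := zpow_ne_zero (2 * (m : ℤ) ^ 2 + 2 * m + 1) u0
  generalize (q ^ 4) ^ (2 * (m : ℤ) ^ 2 + 2 * m + 1) = z at *
  field_simp

noncomputable def FF (q : ℂ) (i j k l : ℕ) : ℂ :=
  q ^ ((4*(i:ℤ)^2 + 4*(j:ℤ)^2 + 4*(k:ℤ)^2 + 5*(l:ℤ)^2 - 4*(i:ℤ)*(l:ℤ) - 4*(j:ℤ)*(l:ℤ) + 4*(k:ℤ)*(l:ℤ) - 4*(i:ℤ) + 4*(j:ℤ) - 4*(k:ℤ) - 2*(l:ℤ)) : ℤ) /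
          (qPoch (q ^ 8) (q ^ 8) i * qPoch (q ^ 8) (q ^ 8) j * qPoch (q ^ 8) (q ^ 8) k * qPoch (q ^ 8) (q ^ 8) l)

noncomputable def ee (w z : ℂ) (n : ℕ) : ℂ := w ^ ((n : ℤ) ^ 2 - n) * z ^ (n : ℤ) * RR (w ^ 2) n

lemma ee_summ {w : ℂ} (h0 : w ≠ 0) (h1 : ‖w‖ < 1) {z : ℂ} (hz : z ≠ 0) :
    Summable fun n : ℕ => ‖ee w z n‖ :=
  (euler_summ h0 h1 hz).comp_injective (i := fun n : ℕ => (n : ℤ)) Nat.cast_injective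

lemma ee_sum {w : ℂ} (h0 : w ≠ 0) (h1 : ‖w‖ < 1) {z : ℂ} (hz : z ≠ 0) :
    ∑' n : ℕ, ee w z n = qPochInf (-z) (w ^ 2) := by
  rw [← euler h0 h1 hz, tsum_int_nat]
  · rfl
  · intro m hm
    rw [RR_neg _ hm, mul_zero]

lemma FF_eq {q : ℂ} (h0 : q ≠ 0) (i j k l : ℕ) : FF q i j k l =
    q ^ (5 * (l : ℤ) ^ 2 - 2 * l) * RR ((q ^ 4) ^ 2) l *
      (ee (q ^ 4) ((q ^ 4) ^ (-(l : ℤ))) i * (ee (q ^ 4) ((q ^ 4) ^ (2 - (l : ℤ))) j *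
        ee (q ^ 4) ((q ^ 4) ^ (l : ℤ)) k)) := by
  unfold FF ee
  rw [RR_nat, RR_nat, RR_nat, RR_nat, ← pow_mul, show 4 * 2 = 8 by norm_num, div_eq_mul_inv, mul_inv,
    mul_inv, mul_inv]
  simp only [← zpow_mul, pow_zpow']
  rw [show (4*(i:ℤ)^2 + 4*(j:ℤ)^2 + 4*(k:ℤ)^2 + 5*(l:ℤ)^2 - 4*(i:ℤ)*(l:ℤ) - 4*(j:ℤ)*(l:ℤ) + 4*(k:ℤ)*(l:ℤ) - 4*(i:ℤ) + 4*(j:ℤ) - 4*(k:ℤ) - 2*(l:ℤ)) =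
    (5 * (l : ℤ) ^ 2 - 2 * l) + ((((4 : ℕ) : ℤ) * ((i : ℤ) ^ 2 - i) + ((4 : ℕ) : ℤ) * (-(l : ℤ) * i)) +
      ((((4 : ℕ) : ℤ) * ((j : ℤ) ^ 2 - j) + ((4 : ℕ) : ℤ) * ((2 - (l : ℤ)) * j)) +
      (((4 : ℕ) : ℤ) * ((k : ℤ) ^ 2 - k) + ((4 : ℕ) : ℤ) * ((l : ℤ) * k)))) by push_cast; ring,
    zpow_add₀ h0 (5 * (l : ℤ) ^ 2 - 2 * l), zpow_add₀ h0 (_ + _) (_ + _), zpow_add₀ h0 (_ + _) (_ + _),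
    zpow_add₀ h0, zpow_add₀ h0, zpow_add₀ h0]
  ring

lemma FF_summ {q : ℂ} (h0 : q ≠ 0) (h1 : ‖q‖ < 1) :
    Summable fun p : ℕ × ℕ × ℕ × ℕ => FF q p.1 p.2.1 p.2.2.1 p.2.2.2 := by
  obtain ⟨C, hC, hR⟩ := RR_bdd (norm_pow_lt' h1 8 (by norm_num))
  have hq : 0 < ‖q‖ := norm_pos_iff.2 h0
  have g := summable_geometric_of_lt_one (norm_nonneg q) h1
  have nn : ∀ n : ℕ, 0 ≤ ‖q‖ ^ n := fun n => by positivity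
  have g2 := g.mul_of_nonneg g nn nn
  have g3 := g.mul_of_nonneg g2 nn (fun x => mul_nonneg (nn _) (nn _))
  have g4 := g.mul_of_nonneg g3 nn (fun x => mul_nonneg (nn _) (mul_nonneg (nn _) (nn _)))
  refine Summable.of_norm_bounded (g4.mul_left (‖q‖ ^ (-4 : ℤ) * C ^ 4)) ?_
  rintro ⟨i, j, k, l⟩
  unfold FF
  simp only
  rw [div_eq_mul_inv, mul_inv, mul_inv, mul_inv, ← RR_nat, ← RR_nat, ← RR_nat, ← RR_nat]
  simp only [norm_mul, norm_zpow]
  have he : ‖q‖ ^ ((4*(i:ℤ)^2 + 4*(j:ℤ)^2 + 4*(k:ℤ)^2 + 5*(l:ℤ)^2 - 4*(i:ℤ)*(l:ℤ) - 4*(j:ℤ)*(l:ℤ) + 4*(k:ℤ)*(l:ℤ) - 4*(i:ℤ) + 4*(j:ℤ) - 4*(k:ℤ) - 2*(l:ℤ)) : ℤ) ≤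
      ‖q‖ ^ (-4 + ((i : ℤ) + (j + (k + l)))) := by
    apply zpow_le_zpow_right_of_le_one₀ hq h1.le
    have : ∀ i j k l : ℤ, (-4 + (i + (j + (k + l)))) ≤ 4*i^2 + 4*j^2 + 4*k^2 + 5*l^2 - 4*i*l - 4*j*l + 4*k*l - 4*i + 4*j - 4*k - 2*l := by
      intro i j k l
      nlinarith [sq_nonneg (4 * (2 * i - l) - 5), sq_nonneg (4 * (2 * j - l) + 3),
        sq_nonneg (4 * (2 * k + l) - 5), sq_nonneg (8 * l - 3)]
    exact this _ _ _ _
  have he2 : ‖q‖ ^ (-4 + ((i : ℤ) + (j + (k + l)))) = ‖q‖ ^ (-4 : ℤ) *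
      (‖q‖ ^ i * (‖q‖ ^ j * (‖q‖ ^ k * ‖q‖ ^ l))) := by
    rw [zpow_add₀ hq.ne', zpow_add₀ hq.ne', zpow_add₀ hq.ne', zpow_add₀ hq.ne']
    simp only [zpow_natCast]
  rw [he2] at he
  calc _ ≤ ‖q‖ ^ (-4 : ℤ) * (‖q‖ ^ i * (‖q‖ ^ j * (‖q‖ ^ k * ‖q‖ ^ l))) * (C * C * C * C) := by
        gcongr <;> apply hR
    _ = _ := by ring

def reord : ℕ × (ℕ × ℕ × ℕ) ≃ ℕ × ℕ × ℕ × ℕ where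
  toFun p := (p.2.1, p.2.2.1, p.2.2.2, p.1)
  invFun p := (p.2.2.2, (p.1, p.2.1, p.2.2.1))
  left_inv _ := rfl
  right_inv _ := rfl

lemma prod3 {a b c : ℕ → ℂ} (ha : Summable fun n => ‖a n‖) (hb : Summable fun n => ‖b n‖)
    (hc : Summable fun n => ‖c n‖) (D : ℂ) :
    ∑' x : ℕ × ℕ × ℕ, D * (a x.1 * (b x.2.1 * c x.2.2)) =
      D * ((∑' n, a n) * (∑' n, b n) * ∑' n, c n) := by
  rw [tsum_mul_left, mul_assoc (∑' n, a n), tsum_mul_tsum_of_summable_norm hb hc,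
    tsum_mul_tsum_of_summable_norm ha (hb.mul_norm hc)]

lemma sum_l {q : ℂ} (h0 : q ≠ 0) (h1 : ‖q‖ < 1) :
    HasSum (fun l : ℕ => q ^ (5 * (l : ℤ) ^ 2 - 2 * l) * RR ((q ^ 4) ^ 2) l *
      (aa (q ^ 4) (-(l : ℤ)) * aa (q ^ 4) (2 - (l : ℤ)) * aa (q ^ 4) (l : ℤ)))
      (∑' p : ℕ × ℕ × ℕ × ℕ, FF q p.1 p.2.1 p.2.2.1 p.2.2.2) := by
  have u0 : q ^ 4 ≠ 0 := by positivity
  have u1 := norm_pow_lt' h1 4 (by norm_num)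
  have s := reord.summable_iff.2 (FF_summ h0 h1)
  have hs := reord.hasSum_iff.2 (FF_summ h0 h1).hasSum
  refine hs.prod_fiberwise fun l => ?_
  have s' := s.prod_factor l
  refine (s'.hasSum_iff).2 ?_
  have z1 := zpow_ne_zero (-(l : ℤ)) u0
  have z2 := zpow_ne_zero (2 - (l : ℤ)) u0
  have z3 := zpow_ne_zero (l : ℤ) u0
  have := prod3 (ee_summ u0 u1 z1) (ee_summ u0 u1 z2) (ee_summ u0 u1 z3)
    (q ^ (5 * (l : ℤ) ^ 2 - 2 * l) * RR ((q ^ 4) ^ 2) l)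
  rw [ee_sum u0 u1 z1, ee_sum u0 u1 z2, ee_sum u0 u1 z3] at this
  unfold aa
  rw [← this]
  refine tsum_congr fun x => ?_
  exact FF_eq h0 _ _ _ _

lemma evenodd {f : ℕ → ℂ} {a A B : ℂ} {g h : ℕ → ℂ} (hf : HasSum f a)
    (hg : ∀ m, f (2 * m) = g m) (hh : ∀ m, f (2 * m + 1) = h m)
    (hA : ∑' m, g m = A) (hB : ∑' m, h m = B) : a = A + B := by
  rw [← hf.tsum_eq, ← tsum_even_add_odd
    (hf.summable.comp_injective (i := fun m : ℕ => 2 * m) (fun a b h => by simpa using h))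
    (hf.summable.comp_injective (i := fun m : ℕ => 2 * m + 1) (fun a b h => by simpa using h)),
    tsum_congr hg, tsum_congr hh, hA, hB]

lemma main_eq {q : ℂ} (h0 : q ≠ 0) (h1 : ‖q‖ < 1) :
    ∑' p : ℕ × ℕ × ℕ × ℕ, FF q p.1 p.2.1 p.2.2.1 p.2.2.2 =
    4 * (J q 16)^3 * Jam q 32 80 / (J q 8)^4
      + q ^ ((-1 : ℤ)) * (J q 8)^7 * Jam q 12 40 * Jam q 16 80 /
        ((J q 4)^4 * (J q 16)^4 * J q 80) := by
  have u0 : q ^ 4 ≠ 0 := by positivity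
  have u1 := norm_pow_lt' h1 4 (by norm_num)
  have hp := norm_sq_lt u1
  have s := sum_l h0 h1
  have A := slater46 u0 u1
  have B := slater97 u0 u1
  have s2 := evenodd s (even_term h0 h1) (odd_term h0 h1)
    (tsum_mul_left.trans (congrArg _ A)) (tsum_mul_left.trans (congrArg _ B))
  rw [s2]
  clear A B s2
  have qu := quint u0 u1
  have n4 : J q 4 ≠ 0 := qPochInf_self_ne u1
  have n8 : J q 8 ≠ 0 := qPochInf_self_ne (norm_pow_lt' h1 8 (by norm_num))
  have n16 : J q 16 ≠ 0 := qPochInf_self_ne (norm_pow_lt' h1 16 (by norm_num))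
  have n80 : J q 80 ≠ 0 := qPochInf_self_ne (norm_pow_lt' h1 80 (by norm_num))
  have b1 := bisect u1
  have b2 := bisect hp
  have m1 := negmul (q ^ 4) hp
  have m2 := negmul ((q ^ 4) ^ 2) hp
  have a1 : aa (q ^ 4) 1 = qPochInf (-q ^ 4) (q ^ 8) := by
    unfold aa; rw [zpow_one, ← pow_mul]
  have a2 : aa (q ^ 4) 2 = qPochInf (-q ^ 8) (q ^ 8) := by
    unfold aa; rw [zpow_ofNat, ← pow_mul]
  rw [a1, a2]
  clear s a1 a2 hp u1 u0
  simp only [← pow_mul] at qu b1 b2 m1 m2 ⊢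
  simp only [Nat.reduceMul] at qu b1 b2 m1 m2 ⊢
  unfold J at n4 n8 n16 n80
  unfold J Jam
  simp only [Nat.reduceSub]
  generalize qPochInf (q ^ 4) (q ^ 4) = j4 at *
  generalize qPochInf (q ^ 8) (q ^ 8) = j8 at *
  generalize qPochInf (q ^ 16) (q ^ 16) = j16 at *
  generalize qPochInf (q ^ 80) (q ^ 80) = j80 at *
  generalize qPochInf (-q ^ 4) (q ^ 8) = b at *
  generalize qPochInf (-q ^ 8) (q ^ 8) = a at *
  have ha : a = j16 / j8 := by rw [eq_div_iff n8]; exact m2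
  have hb : b = j8 ^ 2 / (j4 * j16) := by
    rw [eq_div_iff (mul_ne_zero n4 n16)]
    linear_combination (-b * j16) * b1 + j8 * j16 * m1 + j8 * b2
  have hT : TH (q ^ 4) = qPochInf (q ^ 12) (q ^ 40) * qPochInf (q ^ 28) (q ^ 40) * qPochInf (q ^ 40) (q ^ 40) *
    (qPochInf (q ^ 16) (q ^ 80) * qPochInf (q ^ 64) (q ^ 80) * j80) / j80 := by
    rw [eq_div_iff n80]; exact qu
  rw [ha, hb, hT]
  field_simp

theorem stmt_17 (q : ℂ) (h0 : 0 < ‖q‖) (h1 : ‖q‖ < 1) :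
    (∑' p : ℕ × ℕ × ℕ × ℕ,
      (fun (i j k l : ℕ) =>
        q ^ ((4*(i:ℤ)^2 + 4*(j:ℤ)^2 + 4*(k:ℤ)^2 + 5*(l:ℤ)^2 - 4*(i:ℤ)*(l:ℤ) - 4*(j:ℤ)*(l:ℤ) + 4*(k:ℤ)*(l:ℤ) - 4*(i:ℤ) + 4*(j:ℤ) - 4*(k:ℤ) - 2*(l:ℤ)) : ℤ) /
          (qPoch (q ^ 8) (q ^ 8) i * qPoch (q ^ 8) (q ^ 8) j * qPoch (q ^ 8) (q ^ 8) k * qPoch (q ^ 8) (q ^ 8) l))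
        p.1 p.2.1 p.2.2.1 p.2.2.2)
    = 4 * (J q 16)^3 * Jam q 32 80 / (J q 8)^4
      + q ^ ((-1 : ℤ)) * (J q 8)^7 * Jam q 12 40 * Jam q 16 80 /
        ((J q 4)^4 * (J q 16)^4 * J q 80) := by
  exact main_eq (norm_pos_iff.1 h0) h1
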